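/- arXiv:1110.5515 — 6 statements merged into one kernel-verified Lean document; each statement's English description precedes it below -/
import Mathlib

section
/- Let $F$ be a field, let $n \ge 1$, and let $t_0, t_1, \dots, t_n$ be pairwise distinct elements of $F$. Then for every natural number $j \ge 0$ one has $\sum_{k=0}^{n} \frac{t_k^{n+j}}{\prod_{\ell \neq k}(t_k - t_\ell)} = h_j(t_0,\dots,t_n)$, where $h_j(t_0,\dots,t_n) = \sum_{0 \le i_1 \le i_2 \le \dots \le i_j \le n} t_{i_1} t_{i_2} \cdots t_{i_j}$ is the complete homogeneous symmetric polynomial of degree $j$ (the sum of all monomials of degree $j$ in $t_0,\dots,t_n$, with $h_0 = 1$). -/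
/-- The complete homogeneous symmetric polynomial of degree `j` in the variables
`t i`, `i : ι`: the sum of all monomials of degree `j` (with `h 0 = 1`). -/
noncomputable def completeHomogeneous {ι : Type*} [Fintype ι] [DecidableEq ι]
    {F : Type*} [CommRing F] (j : ℕ) (t : ι → F) : F :=
  ∑ mlt ∈ (Finset.univ : Finset ι).sym j, ((mlt : Multiset ι).map t).prod

/-!
The sum over the fixed points is the divided difference of `x ^ (n + j)` at the nodes `t k`.
Multiplying a function by `x - t a` cancels the node `t a` from its divided difference. Hence, under
adjoining a node, the divided differences of the powers of `x` obey the same recurrence as the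
complete homogeneous polynomials, whose monomials are split according to whether they contain the
new variable. The initial values agree because, by Lagrange interpolation, the divided difference of
a polynomial of degree `n` at `n + 1` nodes is its leading coefficient.
-/

open Finset

section CompleteHomogeneous

variable {ι R : Type*} [DecidableEq ι] [CommSemiring R] {s : Finset ι} {a : ι}

theorem sym_insert_succ (s : Finset ι) (a : ι) (j : ℕ) :
    (insert a s).sym (j + 1) = s.sym (j + 1) ∪ ((insert a s).sym j).image (Sym.cons a) := by
  ext m
  simp only [mem_union, mem_image, mem_sym_iff, mem_insert]
  constructor
  · intro hm
    by_cases ham : a ∈ m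
    · refine Or.inr ⟨m.erase a ham, fun b hb ↦ hm b ?_, Sym.cons_erase ham⟩
      exact Sym.cons_erase ham ▸ Sym.mem_cons_of_mem hb
    · exact Or.inl fun b hb ↦ (hm b hb).resolve_left (ne_of_mem_of_not_mem hb ham)
  · rintro (hm | ⟨m, hm, rfl⟩) b hb
    · exact Or.inr (hm b hb)
    · exact (Sym.mem_cons.mp hb).elim Or.inl (hm b)

theorem disjoint_sym_succ_image_cons (ha : a ∉ s) (j : ℕ) (S : Finset (Sym ι j)) :
    Disjoint (s.sym (j + 1)) (S.image (Sym.cons a)) := by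
  refine disjoint_right.mpr fun m hm hms ↦ ?_
  obtain ⟨m, -, rfl⟩ := mem_image.mp hm
  exact ha (mem_sym_iff.mp hms a (Sym.mem_cons_self a m))

/-- The complete homogeneous symmetric polynomial of degree `j` in the variables `t i`, `i ∈ s`.
Indexing by a finset `s`, rather than by a type as in `completeHomogeneous`, allows induction on
the set of variables. -/
def completeHomogeneousOn (s : Finset ι) (t : ι → R) (j : ℕ) : R :=
  ∑ m ∈ s.sym j, ((m : Multiset ι).map t).prod

theorem completeHomogeneousOn_zero (s : Finset ι) (t : ι → R) :
    completeHomogeneousOn s t 0 = 1 := by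
  rw [completeHomogeneousOn, sym_zero, sum_singleton]
  exact Multiset.prod_zero

theorem completeHomogeneousOn_empty_succ (t : ι → R) (j : ℕ) :
    completeHomogeneousOn ∅ t (j + 1) = 0 := by
  rw [completeHomogeneousOn, sym_empty, sum_empty]

theorem completeHomogeneousOn_insert_succ (ha : a ∉ s) (t : ι → R) (j : ℕ) :
    completeHomogeneousOn (insert a s) t (j + 1) =
      completeHomogeneousOn s t (j + 1) + t a * completeHomogeneousOn (insert a s) t j := by
  have cons_injOn : Set.InjOn (Sym.cons a) ((insert a s).sym j : Set (Sym ι j)) :=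
    fun m _ m' _ ↦ (Sym.cons_inj_right a m m').mp
  simp only [completeHomogeneousOn]
  rw [sym_insert_succ, sum_union (disjoint_sym_succ_image_cons ha j _), sum_image cons_injOn,
    mul_sum]
  simp only [Sym.coe_cons, Multiset.map_cons, Multiset.prod_cons]

end CompleteHomogeneous

section DividedDifference

variable {ι F : Type*} [DecidableEq ι] [Field F] {s : Finset ι} {t : ι → F} {a : ι}

/-- The divided difference of `f` at the nodes `t k`, `k ∈ s`, in Lagrange's closed form. It is
meaningful only for `t` injective on `s`: a repeated node makes a denominator vanish, and the
corresponding terms are then `0`. -/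
def dividedDifference (s : Finset ι) (t : ι → F) (f : F → F) : F :=
  ∑ k ∈ s, f (t k) / ∏ l ∈ s.erase k, (t k - t l)

theorem dividedDifference_insert_sub_mul (ha : ∀ k ∈ s, t k ≠ t a) (f : F → F) :
    dividedDifference (insert a s) t (fun x ↦ (x - t a) * f x) = dividedDifference s t f := by
  have has : a ∉ s := fun h ↦ ha a h rfl
  rw [dividedDifference, dividedDifference, sum_insert has, sub_self, zero_mul, zero_div, zero_add]
  refine sum_congr rfl fun k hk ↦ ?_
  rw [erase_insert_of_ne (ne_of_mem_of_not_mem hk has).symm,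
    prod_insert fun h ↦ has (mem_of_mem_erase h), mul_div_mul_left _ _ (sub_ne_zero.mpr (ha k hk))]

theorem dividedDifference_insert_mul (ha : ∀ k ∈ s, t k ≠ t a) (f : F → F) :
    dividedDifference (insert a s) t (fun x ↦ x * f x) =
      dividedDifference s t f + t a * dividedDifference (insert a s) t f := by
  rw [← dividedDifference_insert_sub_mul ha f]
  simp only [dividedDifference, mul_sum, ← sum_add_distrib]
  exact sum_congr rfl fun k _ ↦ by ring

theorem dividedDifference_pow_of_card_eq (ht : Set.InjOn t s) {m : ℕ} (hm : #s = m + 1) :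
    dividedDifference s t (· ^ m) = 1 := by
  have hdegree : (#s : WithBot ℕ) = (Polynomial.X ^ m : Polynomial F).degree + 1 := by
    rw [hm, Polynomial.degree_X_pow, Nat.cast_add_one]
  simpa only [dividedDifference, Polynomial.eval_pow, Polynomial.eval_X,
    Polynomial.leadingCoeff_X_pow] using (Lagrange.leadingCoeff_eq_sum ht hdegree).symm

end DividedDifference

-- The relation `m + 1 = #s + j` avoids the truncated difference `#s - 1`, so that the induction can
-- start from `s = ∅`.
theorem localization_Pn_higher_degree_general {ι F : Type*} [DecidableEq ι] [Field F]
    {s : Finset ι} {t : ι → F} (ht : Set.InjOn t s) {m j : ℕ} (hm : m + 1 = #s + j) :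
    dividedDifference s t (· ^ m) = completeHomogeneousOn s t j := by
  induction s using Finset.induction_on generalizing m j with
  | empty =>
    obtain rfl : j = m + 1 := by simpa using hm.symm
    rw [completeHomogeneousOn_empty_succ, dividedDifference, sum_empty]
  | insert a s has ih =>
    have hts : Set.InjOn t s := ht.mono (coe_subset.mpr (subset_insert a s))
    have hta : ∀ k ∈ s, t k ≠ t a := fun k hk ↦
      ht.ne (mem_insert_of_mem hk) (mem_insert_self a s) (ne_of_mem_of_not_mem hk has)
    induction j generalizing m with
    | zero => rw [completeHomogeneousOn_zero, dividedDifference_pow_of_card_eq ht hm.symm]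
    | succ j ihj =>
      rw [card_insert_of_notMem has] at hm ihj
      obtain rfl : m = #s + j + 1 := by lia
      calc dividedDifference (insert a s) t (· ^ (#s + j + 1))
          = dividedDifference s t (· ^ (#s + j)) +
              t a * dividedDifference (insert a s) t (· ^ (#s + j)) := by
            simp only [pow_succ', dividedDifference_insert_mul hta]
        _ = completeHomogeneousOn s t (j + 1) +
              t a * completeHomogeneousOn (insert a s) t j := by
            rw [ih hts (add_assoc #s j 1), ihj (add_right_comm #s j 1)]
        _ = completeHomogeneousOn (insert a s) t (j + 1) :=
            (completeHomogeneousOn_insert_succ has t j).symm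

theorem localization_Pn_higher_degree {F : Type*} [Field F] (n : ℕ) (hn : 1 ≤ n)
    (t : Fin (n + 1) → F) (ht : Function.Injective t) (j : ℕ) :
    ∑ k : Fin (n + 1), t k ^ (n + j) / ∏ l ∈ Finset.univ.erase k, (t k - t l) =
      completeHomogeneous j t :=
  localization_Pn_higher_degree_general ht.injOn (by rw [card_fin, add_right_comm])
end

section
/- Let $F$ be a field, let $0 < m < n$, and let $t_1, \dots, t_n$ be pairwise distinct elements of $F$. Let $W \in F[x_1,\dots,x_m]$ be a symmetric polynomial (invariant under all permutations of the variables) which is homogeneous of degree $d$ with $d < m(n-m)$. For an $m$-element subset $\lambda \subseteq \{1,\dots,n\}$ write $W(t_\lambda)$ for the evaluation of $W$ at the family $(t_i)_{i \in \lambda}$ (well defined by symmetry of $W$), and write $e_\lambda = \prod_{k \in \lambda,\; \ell \notin \lambda} (t_\ell - t_k)$. Then $\sum_{\lambda \subseteq \{1,\dots,n\},\ |\lambda| = m} \frac{W(t_\lambda)}{e_\lambda} = 0$. -/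
/-!
By Lagrange interpolation in each variable, the sum over all tuples `f : Fin m → ι` of
`G (t ∘ f) / ∏ i, ∏ l ≠ f i, (t l - t (f i))` vanishes as soon as the total degree of `G` is less
than `m (#ι - 1)`. Take `G = W * D`, where `D` has degree at most `m (m - 1)`, vanishes at tuples
with a repeated entry, and symmetrizes to `∏ i ≠ j, (x j - x i)`. Only injective tuples contribute,
and those enumerating a given subset `s` add up to `W (t_s) / e_s`: the factors of the denominator
with both indices in `s` cancel against the symmetrization of `D`, and the remaining ones form the
Euler class `e_s`.
-/

open Finset

theorem sum_eval_div_prod_sub_eq_zero {F ι : Type*} [Field F] [DecidableEq ι] {s : Finset ι}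
    {t : ι → F} (ht : Set.InjOn t s) {P : Polynomial F} (hP : P.degree < (#s - 1 : ℕ)) :
    ∑ i ∈ s, P.eval (t i) / ∏ j ∈ s.erase i, (t j - t i) = 0 := by
  have hP' : P.degree < #s := hP.trans_le (mod_cast Nat.sub_le _ _)
  have hsign : ∀ i ∈ s, P.eval (t i) / ∏ j ∈ s.erase i, (t j - t i) =
      P.eval (t i) / (∏ j ∈ s.erase i, (t i - t j)) / (-1) ^ (#s - 1) := fun i hi ↦ by
    simp_rw [← neg_sub (t i)]
    rw [prod_neg, card_erase_of_mem hi, mul_comm, div_mul_eq_div_div]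
  rw [sum_congr rfl hsign, ← sum_div, ← Lagrange.coeff_eq_sum ht hP',
    Polynomial.coeff_eq_zero_of_degree_lt hP, zero_div]

theorem sum_piFinset_eval_div_prod_sub_eq_zero {F ι κ : Type*} [Field F] [DecidableEq ι]
    [Fintype κ] [DecidableEq κ] {s : κ → Finset ι} {t : κ → ι → F}
    (ht : ∀ i, Set.InjOn (t i) (s i)) {G : MvPolynomial κ F}
    (hG : G.totalDegree < ∑ i, (#(s i) - 1)) :
    ∑ f ∈ Fintype.piFinset s, MvPolynomial.eval (fun i ↦ t i (f i)) G /
      ∏ i, ∏ j ∈ (s i).erase (f i), (t i j - t i (f i)) = 0 := by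
  simp_rw [MvPolynomial.eval_eq', sum_div]
  rw [sum_comm]
  refine sum_eq_zero fun a ha ↦ ?_
  obtain ⟨i, -, hi⟩ : ∃ i ∈ univ, a i < #(s i) - 1 := exists_lt_of_sum_lt <| by
    simpa [Finsupp.sum_fintype] using (MvPolynomial.le_totalDegree ha).trans_lt hG
  have hvanish : ∑ k ∈ s i, t i k ^ a i / ∏ j ∈ (s i).erase k, (t i j - t i k) = 0 := by
    simpa using sum_eval_div_prod_sub_eq_zero (ht i) (P := Polynomial.X ^ a i)
      (by simpa using hi)
  simp_rw [mul_div_assoc, ← prod_div_distrib, ← mul_sum]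
  rw [← prod_univ_sum s fun i k ↦ t i k ^ a i / ∏ j ∈ (s i).erase k, (t i j - t i k),
    prod_eq_zero (mem_univ i) hvanish, mul_zero]

section discrSummand

variable {R : Type*} [CommRing R] {m : ℕ}

variable (R m) in
/-- The diagonal term of the Leibniz expansion of `det (vandermonde (-X))`, times the whole of
`det (vandermonde X)`. Summing it over all permutations of the variables yields
`∏ i ≠ j, (X j - X i)`, the discriminant up to sign, without division by `m!`. -/
noncomputable def discrSummand : MvPolynomial (Fin m) R :=
  ∏ i : Fin m, ((-MvPolynomial.X i) ^ (i : ℕ) *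
    ∏ j ∈ Ioi i, (MvPolynomial.X j - MvPolynomial.X i))

theorem eval_discrSummand (v : Fin m → R) :
    MvPolynomial.eval v (discrSummand R m) =
      (∏ i, (-v i) ^ (i : ℕ)) * (Matrix.vandermonde v).det := by
  simp [discrSummand, Matrix.det_vandermonde, prod_mul_distrib]

theorem eval_discrSummand_of_not_injective {v : Fin m → R} (hv : ¬ Function.Injective v) :
    MvPolynomial.eval v (discrSummand R m) = 0 := by
  obtain ⟨i, j, hij, hne⟩ := Function.not_injective_iff.1 hv
  rw [eval_discrSummand, Matrix.det_zero_of_row_eq hne, mul_zero]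
  ext k
  simp [hij]

theorem prod_prod_erase_sub_eq_det_vandermonde_mul_det_vandermonde_neg (v : Fin m → R) :
    ∏ i, ∏ j ∈ univ.erase i, (v j - v i) =
      (Matrix.vandermonde v).det * (Matrix.vandermonde (-v)).det := by
  simp_rw [Matrix.det_vandermonde, ← prod_mul_distrib, Pi.neg_apply, neg_sub_neg, ← compl_singleton]
  exact (prod_prod_Ioi_mul_eq_prod_prod_off_diag fun j i ↦ v j - v i).symm

theorem sum_perm_eval_discrSummand (v : Fin m → R) :
    ∑ σ : Equiv.Perm (Fin m), MvPolynomial.eval (fun i ↦ v (σ i)) (discrSummand R m) =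
      ∏ i, ∏ j ∈ univ.erase i, (v j - v i) := by
  have halt (σ : Equiv.Perm (Fin m)) : (Matrix.vandermonde fun i ↦ v (σ i)).det =
      Equiv.Perm.sign σ * (Matrix.vandermonde v).det :=
    Matrix.det_permute σ (Matrix.vandermonde v)
  have hleibniz : (Matrix.vandermonde (-v)).det =
      ∑ σ : Equiv.Perm (Fin m), (Equiv.Perm.sign σ : R) * ∏ i, (-v (σ i)) ^ (i : ℕ) :=
    Matrix.det_apply' _
  rw [prod_prod_erase_sub_eq_det_vandermonde_mul_det_vandermonde_neg, hleibniz, mul_sum]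
  refine sum_congr rfl fun σ _ ↦ ?_
  rw [eval_discrSummand, halt]
  ring

theorem totalDegree_discrSummand_le [Nontrivial R] :
    (discrSummand R m).totalDegree ≤ m * (m - 1) := by
  have hX (i : Fin m) : ((-MvPolynomial.X i : MvPolynomial (Fin m) R) ^ (i : ℕ)).totalDegree ≤ i :=
    (MvPolynomial.totalDegree_pow _ _).trans (by simp)
  have hsub (i : Fin m) : (∏ j ∈ Ioi i, (MvPolynomial.X j - MvPolynomial.X i :
      MvPolynomial (Fin m) R)).totalDegree ≤ m - 1 - i := by
    refine (MvPolynomial.totalDegree_finsetProd _ _).trans ?_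
    refine (sum_le_card_nsmul _ _ 1 fun j _ ↦ ?_).trans (by simp)
    exact (MvPolynomial.totalDegree_sub _ _).trans (by simp)
  refine (MvPolynomial.totalDegree_finsetProd _ _).trans ?_
  refine (sum_le_card_nsmul univ _ (m - 1) fun i _ ↦ ?_).trans (by simp)
  calc _ ≤ (i : ℕ) + (m - 1 - i) :=
        (MvPolynomial.totalDegree_mul _ _).trans (add_le_add (hX i) (hsub i))
    _ = m - 1 := by lia

end discrSummand

theorem prod_prod_erase_equiv {κ ι M : Type*} [Fintype κ] [DecidableEq κ] [Fintype ι]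
    [DecidableEq ι] [CommMonoid M] {s : Finset ι} (e : κ ≃ s) (g : ι → ι → M) :
    ∏ i, ∏ l ∈ univ.erase (e i : ι), g (e i) l =
      (∏ i, ∏ j ∈ univ.erase i, g (e i) (e j)) * ∏ k ∈ s, ∏ l ∈ sᶜ, g k l := by
  rw [← prod_coe_sort s, ← e.prod_comp, ← prod_mul_distrib]
  refine prod_congr rfl fun i _ ↦ ?_
  have hmap : (univ.erase i).map (e.toEmbedding.trans (.subtype _)) = s.erase (e i) := by
    simp [← map_map, map_erase, attach_map_val]
  have hsplit : univ.erase (e i : ι) = s.erase (e i) ∪ sᶜ := by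
    ext l
    by_cases hl : l ∈ s <;> aesop
  rw [hsplit, prod_union (disjoint_compl_right.mono_left (erase_subset _ _)), ← hmap, prod_map]
  rfl

theorem sum_perm_eval_mul_discrSummand_div {F ι : Type*} [Field F] [Fintype ι] [DecidableEq ι]
    {m : ℕ} {t : ι → F} (ht : Function.Injective t) {W : MvPolynomial (Fin m) F}
    (hW : W.IsSymmetric) {s : Finset ι} (e : Fin m ≃ s) :
    ∑ σ : Equiv.Perm (Fin m), MvPolynomial.eval (fun i ↦ t (e (σ i))) (W * discrSummand F m) /
        ∏ i, ∏ l ∈ univ.erase (e (σ i) : ι), (t l - t (e (σ i))) =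
      MvPolynomial.eval (fun i ↦ t (e i)) W / ∏ k ∈ s, ∏ l ∈ sᶜ, (t l - t k) := by
  have hWσ (σ : Equiv.Perm (Fin m)) :
      MvPolynomial.eval (fun i ↦ t (e (σ i))) W = MvPolynomial.eval (fun i ↦ t (e i)) W := by
    conv_rhs => rw [← hW σ, MvPolynomial.eval_rename]
    rfl
  have hden (σ : Equiv.Perm (Fin m)) :
      ∏ i, ∏ l ∈ univ.erase (e (σ i) : ι), (t l - t (e (σ i))) =
        ∏ i, ∏ l ∈ univ.erase (e i : ι), (t l - t (e i)) :=
    Equiv.prod_comp σ fun i ↦ ∏ l ∈ univ.erase (e i : ι), (t l - t (e i))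
  have hdiscr : ∏ i, ∏ j ∈ univ.erase i, (t (e j) - t (e i)) ≠ 0 :=
    prod_ne_zero_iff.2 fun i _ ↦ prod_ne_zero_iff.2 fun j hj ↦ sub_ne_zero.2 <|
      (ht.comp (Subtype.val_injective.comp e.injective)).ne (ne_of_mem_erase hj)
  simp_rw [map_mul, hWσ, hden]
  rw [← sum_div, ← mul_sum, sum_perm_eval_discrSummand fun i ↦ t (e i),
    prod_prod_erase_equiv e fun k l ↦ t l - t k, mul_comm (MvPolynomial.eval _ W),
    mul_div_mul_left _ _ hdiscr]

theorem sum_subset_sum_perm_eq_sum_fun {ι M : Type*} [Fintype ι] [AddCommMonoid M] {m : ℕ}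
    (e : ∀ s : {s : Finset ι // #s = m}, Fin m ≃ s.1) {H : (Fin m → ι) → M}
    (hH : ∀ f, ¬ Function.Injective f → H f = 0) :
    ∑ s, ∑ σ : Equiv.Perm (Fin m), H (fun i ↦ e s (σ i)) = ∑ f, H f := by
  rw [← Fintype.sum_prod_type']
  refine Fintype.sum_of_injective
    (fun (p : {s : Finset ι // #s = m} × Equiv.Perm (Fin m)) i ↦ (e p.1 (p.2 i) : ι))
    ?injective _ _ ?surjective fun _ ↦ rfl
  case injective =>
    have hrange (s : {s : Finset ι // #s = m}) (σ : Equiv.Perm (Fin m)) :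
        Set.range (fun i ↦ (e s (σ i) : ι)) = s.1 :=
      ((σ.trans (e s)).surjective.range_comp ((↑) : s.1 → ι)).trans Subtype.range_coe
    rintro ⟨s, σ⟩ ⟨s', σ'⟩ h
    obtain rfl : s = s' := Subtype.ext <| coe_injective <|
      (hrange s σ).symm.trans <| (congrArg Set.range h).trans (hrange s' σ')
    refine Prod.ext rfl (Equiv.ext fun i ↦ ?_)
    exact (e s).injective (Subtype.ext (congrFun h i))
  case surjective =>
    refine fun f hf ↦ hH f fun hinj ↦ hf ?_
    let s : {s : Finset ι // #s = m} := ⟨univ.map ⟨f, hinj⟩, by simp⟩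
    let g (i : Fin m) : s.1 := ⟨f i, mem_map_of_mem ⟨f, hinj⟩ (mem_univ i)⟩
    have hg : Function.Injective ((e s).symm ∘ g) :=
      (e s).symm.injective.comp fun i j h ↦ hinj (congrArg Subtype.val h)
    refine ⟨(s, Equiv.ofBijective _ (Finite.injective_iff_bijective.1 hg)), ?_⟩
    ext i
    simp [g]

theorem localization_grassmannian_low_degree_general {F ι : Type*} [Field F] [Fintype ι]
    [DecidableEq ι] {m : ℕ} {t : ι → F} (ht : Function.Injective t)
    {W : MvPolynomial (Fin m) F} (hWsymm : W.IsSymmetric)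
    (hWdeg : W.totalDegree < m * (Fintype.card ι - m))
    (e : ∀ s : {s : Finset ι // #s = m}, Fin m ≃ s.1) :
    ∑ s, MvPolynomial.eval (fun i ↦ t (e s i)) W / ∏ k ∈ s.1, ∏ l ∈ s.1ᶜ, (t l - t k) = 0 := by
  have hdeg : (W * discrSummand F m).totalDegree < ∑ _i : Fin m, (#(univ : Finset ι) - 1) := by
    have hm : m * (Fintype.card ι - m) + m * (m - 1) = m * (Fintype.card ι - 1) := by
      obtain ⟨-, hcard⟩ : 0 < m ∧ 0 < Fintype.card ι - m := by simpa using hWdeg.pos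
      rw [← mul_add]
      congr 1
      lia
    calc _ ≤ W.totalDegree + m * (m - 1) := (MvPolynomial.totalDegree_mul _ _).trans
          (by gcongr; exact totalDegree_discrSummand_le)
      _ < m * (Fintype.card ι - m) + m * (m - 1) := by gcongr
      _ = ∑ _i : Fin m, (#(univ : Finset ι) - 1) := by simp [hm]
  have hzero := sum_piFinset_eval_div_prod_sub_eq_zero (t := fun _ ↦ t) (fun _ ↦ ht.injOn) hdeg
  rw [Fintype.piFinset_univ, ← sum_subset_sum_perm_eq_sum_fun e fun f hf ↦ ?_] at hzero
  · simpa only [sum_perm_eval_mul_discrSummand_div ht hWsymm] using hzero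
  · have htf : ¬ Function.Injective fun i ↦ t (f i) := fun h ↦ hf (.of_comp h)
    rw [map_mul, eval_discrSummand_of_not_injective htf, mul_zero, zero_div]

theorem localization_grassmannian_low_degree {F : Type*} [Field F] (m n : ℕ)
    (hm : 0 < m) (hmn : m < n)
    (t : Fin n → F) (ht : Function.Injective t)
    (W : MvPolynomial (Fin m) F) (hWsymm : W.IsSymmetric)
    (d : ℕ) (hWhom : W.IsHomogeneous d) (hd : d < m * (n - m)) :
    ∑ s : {s : Finset (Fin n) // s.card = m},
      (MvPolynomial.eval (fun i => t ↑(s.1.orderIsoOfFin s.2 i)) W) /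
        ∏ k ∈ s.1, ∏ l ∈ s.1ᶜ, (t l - t k) = 0 :=
  localization_grassmannian_low_degree_general ht hWsymm
    (by simpa using hWhom.totalDegree_le.trans_lt hd) fun s ↦ (s.1.orderIsoOfFin s.2).toEquiv
end

section
/- Let $0 < m < n$, let $R = \mathbb{Q}[t_1,\dots,t_n]$ be the polynomial ring in $n$ variables, and let $K$ be its field of fractions. Let $W \in \mathbb{Q}[x_1,\dots,x_m]$ be a symmetric polynomial. For an $m$-element subset $\lambda \subseteq \{1,\dots,n\}$ write $W(t_\lambda)$ for the evaluation of $W$ at the family of variables $(t_i)_{i \in \lambda}$ (well defined by symmetry of $W$), and write $e_\lambda = \prod_{k \in \lambda,\; \ell \notin \lambda} (t_\ell - t_k)$. Then the element $\sum_{\lambda \subseteq \{1,\dots,n\},\ |\lambda| = m} \frac{W(t_\lambda)}{e_\lambda}$ of $K$ lies in the image of $R$ in $K$, i.e. it is a polynomial in $t_1,\dots,t_n$; moreover, if $W$ is homogeneous of degree $d \ge m(n-m)$, then this polynomial is homogeneous of degree $d - m(n-m)$. -/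
open MvPolynomial

/-- The localization expression
`∑_{λ ⊆ {1,…,n}, |λ| = m} W(t_λ) / ∏_{k ∈ λ, ℓ ∉ λ} (t_ℓ - t_k)`,
viewed as an element of the field of fractions of `ℚ[t_1,…,t_n]`. -/
noncomputable def grassLocSum (m n : ℕ) (W : MvPolynomial (Fin m) ℚ) :
    FractionRing (MvPolynomial (Fin n) ℚ) :=
  ∑ s : {s : Finset (Fin n) // s.card = m},
    algebraMap (MvPolynomial (Fin n) ℚ) (FractionRing (MvPolynomial (Fin n) ℚ))
        (MvPolynomial.aeval (fun i => (X ↑(s.1.orderIsoOfFin s.2 i) : MvPolynomial (Fin n) ℚ)) W) /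
      algebraMap (MvPolynomial (Fin n) ℚ) (FractionRing (MvPolynomial (Fin n) ℚ))
        (∏ k ∈ s.1, ∏ l ∈ s.1ᶜ, (X l - X k))

/-!
The Vandermonde determinant `V` of all the variables is a common denominator of the fractions
`W(t_s) / e_s`, so it has to divide the sum of the numerators `W(t_s) * (V / e_s)`. Its factors
`t_i - t_j` are pairwise non-associated primes, so they can be treated one at a time. By symmetry
of `W` and antisymmetry of `V`, the transposition of `i` and `j` takes the numerator at `s` to the
negative of the one at the transposed subset. Modulo `t_i - t_j` the transposition acts trivially,
so these two cancel if the subsets differ. If they agree, then `i` and `j` lie on the same side of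
`s`, so `t_i - t_j` does not divide `e_s` and divides `V / e_s`. The degree of the quotient is read
off after clearing denominators.
-/

open scoped Pointwise

section DifferenceOfVariables

variable {σ R : Type*} [CommRing R]

theorem X_sub_X_dvd_sub_rename_update [DecidableEq σ] (i j : σ) (p : MvPolynomial σ R) :
    (X i - X j) ∣ p - rename (Function.update id i j) p := by
  let π := Ideal.Quotient.mkₐ R (Ideal.span {(X i - X j : MvPolynomial σ R)})
  have hπ : π = π.comp (rename (Function.update id i j)) := by
    ext a
    rcases eq_or_ne a i with rfl | ha
    · simp [π, Ideal.Quotient.mk_eq_mk_iff_sub_mem]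
    · simp [ha]
  rw [← Ideal.mem_span_singleton, ← Ideal.Quotient.mk_eq_mk_iff_sub_mem]
  exact DFunLike.congr_fun hπ p

theorem X_sub_X_dvd_iff_rename_update_eq_zero [DecidableEq σ] {i j : σ} {p : MvPolynomial σ R} :
    (X i - X j) ∣ p ↔ rename (Function.update id i j) p = 0 := by
  refine ⟨?_, fun hp => by simpa [hp] using X_sub_X_dvd_sub_rename_update i j p⟩
  rintro ⟨q, rfl⟩
  rcases eq_or_ne j i with rfl | hji <;> simp [*]

theorem X_sub_X_ne_zero [Nontrivial R] {i j : σ} (hij : i ≠ j) :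
    (X i - X j : MvPolynomial σ R) ≠ 0 :=
  sub_ne_zero.mpr (X_injective.ne hij)

theorem sym2_eq_of_X_sub_X_dvd_X_sub_X [Nontrivial R] {i j a b : σ} (hab : a ≠ b)
    (h : (X i - X j : MvPolynomial σ R) ∣ X a - X b) : s(i, j) = s(a, b) := by
  classical
  rw [X_sub_X_dvd_iff_rename_update_eq_zero, map_sub, rename_X, rename_X, sub_eq_zero] at h
  have hid := X_injective h
  grind [Function.update_apply]

/-- Setting `X i = X j` makes the terms of each orbit of size two cancel. Antisymmetry of the sum
alone would not suffice in characteristic two. -/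
theorem X_sub_X_dvd_sum_of_involutive [DecidableEq σ] {ι : Type*} [Fintype ι] {τ : ι → ι}
    (hτ : Function.Involutive τ) {i j : σ} {g : ι → MvPolynomial σ R}
    (hg : ∀ s, rename (Equiv.swap i j) (g s) = -g (τ s))
    (hfix : ∀ s, τ s = s → (X i - X j) ∣ g s) : (X i - X j) ∣ ∑ s, g s := by
  have hswap : Function.update id i j ∘ Equiv.swap i j = Function.update id i j := by
    ext a
    grind [Function.update_apply]
  rw [X_sub_X_dvd_iff_rename_update_eq_zero, map_sum]
  refine Finset.sum_involution (fun s _ => τ s) (fun s _ => ?_) (fun s _ hs hτs => ?_)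
    (fun _ _ => Finset.mem_univ _) fun s _ => hτ s
  · rw [← neg_neg (g (τ s)), ← hg, map_neg, rename_rename, hswap, add_neg_cancel]
  · exact hs (X_sub_X_dvd_iff_rename_update_eq_zero.mp (hfix s hτs))

variable [IsDomain R]

theorem prime_X_sub_X {i j : σ} (hij : i ≠ j) : Prime (X i - X j : MvPolynomial σ R) := by
  classical
  have hker : RingHom.ker (rename (R := R) (Function.update id i j)) = Ideal.span {X i - X j} := by
    ext p
    rw [RingHom.mem_ker, Ideal.mem_span_singleton, X_sub_X_dvd_iff_rename_update_eq_zero]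
  rw [← Ideal.span_singleton_prime (X_sub_X_ne_zero hij), ← hker]
  exact RingHom.ker_isPrime _

theorem prod_X_sub_X_dvd {ι : Type*} {s : Finset ι} {a b : ι → σ} {p : MvPolynomial σ R}
    (hne : ∀ x ∈ s, a x ≠ b x) (hinj : Set.InjOn (fun x => s(a x, b x)) s)
    (hdvd : ∀ x ∈ s, (X (a x) - X (b x)) ∣ p) : ∏ x ∈ s, (X (a x) - X (b x)) ∣ p := by
  classical
  induction s using Finset.induction_on generalizing p with
  | empty => simp
  | insert x s hx ih =>
    simp only [Finset.forall_mem_insert] at hne hdvd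
    obtain ⟨q, rfl⟩ := hdvd.1
    rw [Finset.prod_insert hx]
    refine mul_dvd_mul_left _ (ih hne.2 (hinj.mono (by simp)) fun y hy => ?_)
    refine ((prime_X_sub_X (hne.2 y hy)).dvd_or_dvd (hdvd.2 y hy)).resolve_left fun hyx_dvd => ?_
    have hyx : y = x :=
      hinj (by simp [hy]) (by simp) (sym2_eq_of_X_sub_X_dvd_X_sub_X hne.1 hyx_dvd)
    exact hx (hyx ▸ hy)

end DifferenceOfVariables

theorem isHomogeneous_of_mul_right {σ R : Type*} [CommRing R] [IsDomain R] {p q : MvPolynomial σ R}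
    {a b : ℕ} (hq : q.IsHomogeneous b) (hq0 : q ≠ 0) (hpq : (p * q).IsHomogeneous (a + b)) :
    p.IsHomogeneous a := by
  let _ : GradedAlgebra (homogeneousSubmodule σ R) := gradedAlgebra
  have hcomp := DirectSum.coe_decompose_mul_add_of_right_mem (homogeneousSubmodule σ R)
    (i := a) (a := p) hq
  rw [DirectSum.decompose_of_mem_same _ hpq] at hcomp
  rw [mul_right_cancel₀ hq0 hcomp]
  exact (DirectSum.decompose (homogeneousSubmodule σ R) p a).2

theorem rename_eq_rename_of_isSymmetric {σ τ R : Type*} [CommSemiring R] {W : MvPolynomial τ R}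
    (hW : W.IsSymmetric) {f g : τ → σ} (hf : f.Injective) (hg : g.Injective)
    (hfg : Set.range f = Set.range g) : rename f W = rename g W := by
  let e : Equiv.Perm τ :=
    (Equiv.ofInjective f hf).trans ((Equiv.setCongr hfg).trans (Equiv.ofInjective g hg).symm)
  have he : f = g ∘ e := by
    ext i
    simp [e, Equiv.apply_ofInjective_symm hg]
  rw [he, ← rename_rename, hW e]

theorem algebraMap_eq_sum_div_iff {A K ι : Type*} [CommRing A] [Field K] [Algebra A K]
    [IsFractionRing A K] [Fintype ι] {f e c : ι → A} {D : A} (hD : D ≠ 0)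
    (hc : ∀ s, D = e s * c s) {p : A} :
    algebraMap A K p = ∑ s, algebraMap A K (f s) / algebraMap A K (e s) ↔
      D * p = ∑ s, f s * c s := by
  have hinj := IsFractionRing.injective A K
  have hD' : algebraMap A K D ≠ 0 := (map_ne_zero_iff _ hinj).mpr hD
  have hterm (s : ι) : algebraMap A K D * (algebraMap A K (f s) / algebraMap A K (e s)) =
      algebraMap A K (f s * c s) := by
    have he : algebraMap A K (e s) ≠ 0 :=
      (map_ne_zero_iff _ hinj).mpr (ne_zero_of_dvd_ne_zero hD ⟨c s, hc s⟩)
    rw [hc s, map_mul, map_mul]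
    field_simp
  rw [← mul_right_inj' hD', Finset.mul_sum, ← map_mul, Finset.sum_congr rfl fun s _ => hterm s,
    ← map_sum, hinj.eq_iff]

section Vandermonde

variable (n : ℕ) (R : Type*) [CommRing R]

/-- The Vandermonde determinant of the variables, which serves as a common denominator for the
localization expression. -/
noncomputable def vandermondeX : MvPolynomial (Fin n) R :=
  (Matrix.vandermonde X).det

variable {n R}

theorem rename_swap_vandermondeX {i j : Fin n} (hij : i ≠ j) :
    rename (Equiv.swap i j) (vandermondeX n R) = -vandermondeX n R := by
  have hmap : (rename (Equiv.swap i j)).mapMatrix (Matrix.vandermonde X) =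
      (Matrix.vandermonde (X : Fin n → MvPolynomial (Fin n) R)).submatrix
        (Equiv.swap i j) id := by
    ext a b : 2
    simp [Matrix.vandermonde_apply]
  rw [vandermondeX, AlgHom.map_det, hmap, Matrix.det_permute, Equiv.Perm.sign_swap hij]
  simp

variable [IsDomain R]

theorem vandermondeX_ne_zero : vandermondeX n R ≠ 0 :=
  Matrix.det_vandermonde_ne_zero_iff.mpr X_injective

theorem X_sub_X_dvd_vandermondeX {i j : Fin n} (hij : i ≠ j) :
    (X i - X j) ∣ vandermondeX n R := by
  have hmap : (rename (Function.update id i j)).mapMatrix (Matrix.vandermonde X) =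
      Matrix.vandermonde fun a => (X (Function.update id i j a) : MvPolynomial (Fin n) R) := by
    ext a b : 2
    simp [Matrix.vandermonde_apply]
  rw [X_sub_X_dvd_iff_rename_update_eq_zero, vandermondeX, AlgHom.map_det, hmap,
    Matrix.det_vandermonde_eq_zero_iff]
  exact ⟨i, j, by simp [hij.symm], hij⟩

theorem vandermondeX_dvd {p : MvPolynomial (Fin n) R}
    (hp : ∀ i j, i ≠ j → (X i - X j) ∣ p) : vandermondeX n R ∣ p := by
  rw [vandermondeX, Matrix.det_vandermonde, Finset.prod_sigma']
  have hlt {x : (_ : Fin n) × Fin n} (hx : x ∈ Finset.univ.sigma fun i => Finset.Ioi i) :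
      x.1 < x.2 := by
    simpa using hx
  refine prod_X_sub_X_dvd (fun x hx => (hlt hx).ne') ?_ fun x hx => hp _ _ (hlt hx).ne'
  rintro ⟨i, j⟩ hx ⟨a, b⟩ hy hxy
  have hij := hlt hx
  have hab := hlt hy
  grind

end Vandermonde

section Euler

variable {σ : Type*} [Fintype σ] [DecidableEq σ] (R : Type*) [CommRing R]

/-- The Euler class `∏_{k ∈ s, ℓ ∉ s} (t_ℓ - t_k)` of the tangent space of the Grassmannian at the
fixed point indexed by `s`. -/
noncomputable def grassEuler (s : Finset σ) : MvPolynomial σ R :=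
  ∏ k ∈ s, ∏ l ∈ sᶜ, (X l - X k)

variable {R}

theorem rename_grassEuler (e : Equiv.Perm σ) (s : Finset σ) :
    rename e (grassEuler R s) = grassEuler R (e • s) := by
  have hcompl : (e • s)ᶜ = e • sᶜ := by
    ext a
    simp [← Finset.inv_smul_mem_iff]
  rw [grassEuler, grassEuler, hcompl]
  simp [Finset.smul_finset_def, Finset.prod_image]

theorem isHomogeneous_grassEuler (s : Finset σ) :
    (grassEuler R s).IsHomogeneous (s.card * (Fintype.card σ - s.card)) := by
  have h : (grassEuler R s).IsHomogeneous (∑ _k ∈ s, ∑ _l ∈ sᶜ, 1) :=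
    IsHomogeneous.prod _ _ _ fun k _ => IsHomogeneous.prod _ _ _ fun l _ =>
      (isHomogeneous_X R l).sub (isHomogeneous_X R k)
  simpa [Finset.card_compl] using h

variable [IsDomain R]

theorem grassEuler_ne_zero (s : Finset σ) : grassEuler R s ≠ 0 := by
  refine Finset.prod_ne_zero_iff.mpr fun k hk => Finset.prod_ne_zero_iff.mpr fun l hl => ?_
  exact X_sub_X_ne_zero fun hlk => Finset.mem_compl.mp hl (hlk ▸ hk)

theorem grassEuler_dvd {s : Finset σ} {p : MvPolynomial σ R}
    (hp : ∀ i j, i ≠ j → (X i - X j) ∣ p) : grassEuler R s ∣ p := by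
  have hne {x : σ × σ} (hx : x ∈ s ×ˢ sᶜ) : x.2 ≠ x.1 := by
    rw [Finset.mem_product, Finset.mem_compl] at hx
    exact fun h => hx.2 (h ▸ hx.1)
  rw [grassEuler, ← Finset.prod_product']
  refine prod_X_sub_X_dvd (fun x hx => hne hx) ?_ fun x hx => hp _ _ (hne hx)
  rintro ⟨k, l⟩ hkl ⟨k', l'⟩ hkl' heq
  simp only [Finset.coe_product, Set.mem_prod, Finset.mem_coe, Finset.mem_compl] at hkl hkl'
  grind

theorem not_X_sub_X_dvd_grassEuler {i j : σ} (hij : i ≠ j) {s : Finset σ}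
    (hs : Equiv.swap i j • s = s) : ¬(X i - X j) ∣ grassEuler R s := by
  have hiff : i ∈ s ↔ j ∈ s := by
    rw [← Finset.smul_mem_smul_finset_iff (Equiv.swap i j), hs]
    simp
  intro hdvd
  obtain ⟨k, hk, hdvd⟩ := (prime_X_sub_X hij).exists_mem_finset_dvd hdvd
  obtain ⟨l, hl, hdvd⟩ := (prime_X_sub_X hij).exists_mem_finset_dvd hdvd
  have hl := Finset.mem_compl.mp hl
  have hlk : l ≠ k := fun h => hl (h ▸ hk)
  have hpair : s(i, j) = s(l, k) := sym2_eq_of_X_sub_X_dvd_X_sub_X hlk hdvd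
  grind

end Euler

section Localization

variable {R : Type*} (K : Type*) [CommRing R] [Field K] {m n : ℕ}
  [Algebra (MvPolynomial (Fin n) R) K]

/-- The localization expression `∑_{|s| = m} f_s / e_s` of an equivariant cohomology class, given
by its restrictions `f_s` to the torus-fixed points of the Grassmannian. -/
noncomputable def fixedPointSum (f : Set.powersetCard (Fin n) m → MvPolynomial (Fin n) R) : K :=
  ∑ s, algebraMap _ K (f s) / algebraMap _ K (grassEuler R (s : Finset (Fin n)))

variable {K} [IsDomain R] [IsFractionRing (MvPolynomial (Fin n) R) K]
  {f : Set.powersetCard (Fin n) m → MvPolynomial (Fin n) R}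

theorem exists_algebraMap_eq_fixedPointSum
    (hf : ∀ (e : Equiv.Perm (Fin n)) s, rename e (f s) = f (e • s)) :
    ∃ p, algebraMap (MvPolynomial (Fin n) R) K p = fixedPointSum K f := by
  choose c hc using fun s : Set.powersetCard (Fin n) m =>
    grassEuler_dvd (R := R) (s := (s : Finset (Fin n))) fun _ _ => X_sub_X_dvd_vandermondeX
  have rename_swap_cofactor {i j : Fin n} (hij : i ≠ j) (s : Set.powersetCard (Fin n) m) :
      rename (Equiv.swap i j) (c s) = -c (Equiv.swap i j • s) := by
    refine mul_left_cancel₀ (grassEuler_ne_zero (Equiv.swap i j • (s : Finset (Fin n)))) ?_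
    rw [← rename_grassEuler, ← map_mul, ← hc, rename_swap_vandermondeX hij, rename_grassEuler,
      mul_neg, ← Set.powersetCard.coe_smul, ← hc]
  obtain ⟨p, hp⟩ : vandermondeX n R ∣ ∑ s, f s * c s := by
    refine vandermondeX_dvd fun i j hij => ?_
    refine X_sub_X_dvd_sum_of_involutive (τ := fun s => Equiv.swap i j • s)
      (fun s => by simp [smul_smul]) (fun s => ?_) fun s hs => ?_
    · rw [map_mul, hf, rename_swap_cofactor hij, mul_neg]
    · refine Dvd.dvd.mul_left (((prime_X_sub_X hij).dvd_or_dvd ?_).resolve_left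
        (not_X_sub_X_dvd_grassEuler hij (congrArg Subtype.val hs))) _
      exact hc s ▸ X_sub_X_dvd_vandermondeX hij
  exact ⟨p, (algebraMap_eq_sum_div_iff vandermondeX_ne_zero hc).mpr hp.symm⟩

theorem isHomogeneous_of_algebraMap_eq_fixedPointSum {d : ℕ} (hf : ∀ s, (f s).IsHomogeneous d)
    (hd : m * (n - m) ≤ d) {p : MvPolynomial (Fin n) R}
    (hp : algebraMap _ K p = fixedPointSum K f) : p.IsHomogeneous (d - m * (n - m)) := by
  classical
  have euler_hom (s : Set.powersetCard (Fin n) m) :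
      (grassEuler R (s : Finset (Fin n))).IsHomogeneous (m * (n - m)) := by
    simpa using isHomogeneous_grassEuler (R := R) (s : Finset (Fin n))
  have prod_ne_zero : ∏ s : Set.powersetCard (Fin n) m, grassEuler R (s : Finset (Fin n)) ≠ 0 :=
    Finset.prod_ne_zero_iff.mpr fun s _ => grassEuler_ne_zero _
  have hprod := (algebraMap_eq_sum_div_iff prod_ne_zero fun s =>
    (Finset.mul_prod_erase Finset.univ _ (Finset.mem_univ s)).symm).mp hp
  refine isHomogeneous_of_mul_right (IsHomogeneous.prod _ _ _ fun s _ => euler_hom s)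
    prod_ne_zero ?_
  rw [mul_comm, hprod]
  refine IsHomogeneous.sum _ _ _ fun s hs => ?_
  have hterm := (hf s).mul
    (IsHomogeneous.prod (Finset.univ.erase s) _ _ fun t _ => euler_hom t)
  rwa [← Finset.add_sum_erase _ _ hs, ← add_assoc, Nat.sub_add_cancel hd]

end Localization

section Restriction

variable {σ R : Type*} [LinearOrder σ] [CommRing R] {m : ℕ}

/-- The evaluation `W(t_s)` of `W` at the variables indexed by `s`, taken in increasing order: the
restriction to the fixed point `s` of the characteristic class of the tautological bundle given
by `W`. -/
noncomputable def fixedPointRestriction (W : MvPolynomial (Fin m) R) (s : Set.powersetCard σ m) :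
    MvPolynomial σ R :=
  rename (Set.powersetCard.ofFinEmbEquiv.symm s) W

theorem rename_fixedPointRestriction {W : MvPolynomial (Fin m) R} (hW : W.IsSymmetric)
    (e : Equiv.Perm σ) (s : Set.powersetCard σ m) :
    rename e (fixedPointRestriction W s) = fixedPointRestriction W (e • s) := by
  have range_enum (t : Set.powersetCard σ m) :
      Set.range (Set.powersetCard.ofFinEmbEquiv.symm t) = t :=
    Set.ext (Set.powersetCard.mem_range_ofFinEmbEquiv_symm_iff_mem t)
  rw [fixedPointRestriction, rename_rename]
  refine rename_eq_rename_of_isSymmetric hW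
    (e.injective.comp (RelEmbedding.injective _)) (RelEmbedding.injective _) ?_
  rw [Set.range_comp, range_enum, range_enum, ← Set.powersetCard.coe_coe,
    ← Set.powersetCard.coe_coe, Set.powersetCard.coe_smul, Finset.coe_smul_finset]
  rfl

end Restriction

theorem grassLocSum_is_polynomial_general {R K : Type*} [CommRing R] [IsDomain R] [Field K]
    {m n : ℕ} [Algebra (MvPolynomial (Fin n) R) K] [IsFractionRing (MvPolynomial (Fin n) R) K]
    {W : MvPolynomial (Fin m) R} (hW : W.IsSymmetric) :
    ∃ p : MvPolynomial (Fin n) R,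
      algebraMap _ K p = fixedPointSum K (n := n) (fixedPointRestriction W) ∧
      ∀ d, W.IsHomogeneous d → m * (n - m) ≤ d → p.IsHomogeneous (d - m * (n - m)) := by
  obtain ⟨p, hp⟩ :=
    exists_algebraMap_eq_fixedPointSum (K := K) (n := n) (rename_fixedPointRestriction hW)
  exact ⟨p, hp, fun d hWd hd =>
    isHomogeneous_of_algebraMap_eq_fixedPointSum (fun s => hWd.rename_isHomogeneous) hd hp⟩

theorem grassLocSum_eq_fixedPointSum (m n : ℕ) (W : MvPolynomial (Fin m) ℚ) :
    grassLocSum m n W =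
      fixedPointSum (FractionRing (MvPolynomial (Fin n) ℚ)) (n := n) (fixedPointRestriction W) := by
  refine Fintype.sum_equiv (Equiv.subtypeEquivRight fun _ => Set.powersetCard.mem_iff.symm) _ _
    fun s => ?_
  rw [fixedPointRestriction, rename_eq_aeval]
  rfl

theorem grassLocSum_is_polynomial (m n : ℕ) (hm : 0 < m) (hmn : m < n)
    (W : MvPolynomial (Fin m) ℚ) (hWsymm : W.IsSymmetric) :
    (∃ p : MvPolynomial (Fin n) ℚ,
        algebraMap (MvPolynomial (Fin n) ℚ) (FractionRing (MvPolynomial (Fin n) ℚ)) p =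
          grassLocSum m n W) ∧
      ∀ d : ℕ, W.IsHomogeneous d → m * (n - m) ≤ d →
        ∃ p : MvPolynomial (Fin n) ℚ, p.IsHomogeneous (d - m * (n - m)) ∧
          algebraMap (MvPolynomial (Fin n) ℚ) (FractionRing (MvPolynomial (Fin n) ℚ)) p =
            grassLocSum m n W := by
  obtain ⟨p, hp, hhom⟩ := grassLocSum_is_polynomial_general (n := n)
    (K := FractionRing (MvPolynomial (Fin n) ℚ)) hWsymm
  rw [grassLocSum_eq_fixedPointSum]
  exact ⟨⟨p, hp⟩, fun d hWd hd => ⟨p, hhom d hWd hd, hp⟩⟩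
end

section
/- Let $0 < m < n$, let $R = \mathbb{Q}[t_1,\dots,t_n]$ be the polynomial ring in $n$ variables, and let $K$ be its field of fractions. Let $W \in \mathbb{Q}[x_1,\dots,x_m]$ be a symmetric polynomial which is homogeneous of degree exactly $m(n-m)$. For an $m$-element subset $\lambda \subseteq \{1,\dots,n\}$ write $W(t_\lambda)$ for the evaluation of $W$ at the family of variables $(t_i)_{i \in \lambda}$ (well defined by symmetry of $W$), and write $e_\lambda = \prod_{k \in \lambda,\; \ell \notin \lambda} (t_\ell - t_k)$. Then the element $\sum_{\lambda \subseteq \{1,\dots,n\},\ |\lambda| = m} \frac{W(t_\lambda)}{e_\lambda}$ of $K$ lies in the image of $\mathbb{Q}$ in $K$, i.e. it is a constant rational number independent of the variables. -/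
open MvPolynomial

/-!
Multiply the sum by the Vandermonde determinant `D` of the variables, which every denominator
divides. The resulting numerator vanishes when two variables `t_i`, `t_j` are identified: a subset
containing exactly one of `i`, `j` cancels against its image under the transposition of `i` and
`j`, and for any other subset the factor `t_j - t_i` of `D` survives division by the denominator.
The differences of variables being pairwise non-associated primes, `D` divides the numerator, so
the sum is a polynomial; comparing degrees, it is constant.
-/

namespace GrassLoc

section DifferencesOfVariables

variable {ι R : Type*} [CommRing R]

theorem X_sub_X_dvd_sub_rename_update [DecidableEq ι] (k l : ι) (P : MvPolynomial ι R) :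
    X l - X k ∣ P - rename (Function.update id l k) P := by
  let π := Ideal.Quotient.mkₐ R (Ideal.span {(X l - X k : MvPolynomial ι R)})
  have hX : π (X l) = π (X k) :=
    Ideal.Quotient.mk_eq_mk_iff_sub_mem _ _ |>.2 (Ideal.mem_span_singleton_self _)
  have hπ : π = π.comp (rename (Function.update id l k)) := by
    refine algHom_ext fun i => ?_
    rcases eq_or_ne i l with rfl | hi
    · simp [hX]
    · simp [Function.update_of_ne hi]
  rw [← Ideal.mem_span_singleton, ← Ideal.Quotient.mk_eq_mk_iff_sub_mem]
  exact DFunLike.congr_fun hπ P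

theorem X_sub_X_dvd_iff [DecidableEq ι] {k l : ι} {P : MvPolynomial ι R} :
    X l - X k ∣ P ↔ rename (Function.update id l k) P = 0 := by
  refine ⟨?_, fun h => by simpa [h] using X_sub_X_dvd_sub_rename_update k l P⟩
  rintro ⟨Q, rfl⟩
  simp [Function.update_apply]

theorem rename_update_rename_swap [DecidableEq ι] (k l : ι) (P : MvPolynomial ι R) :
    rename (Function.update id l k) (rename (Equiv.swap k l) P) =
      rename (Function.update id l k) P := by
  rw [rename_rename]
  congr 2
  ext i
  simp only [Function.comp_apply, Function.update_apply, Equiv.swap_apply_def, id]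
  grind

variable [IsDomain R]

theorem prime_X_sub_X {k l : ι} (h : k ≠ l) : Prime (X l - X k : MvPolynomial ι R) := by
  classical
  refine ⟨sub_ne_zero.2 (X_injective.ne h.symm), fun hu => ?_, fun P Q hPQ => ?_⟩
  · have h1 := X_sub_X_dvd_iff.1 (isUnit_iff_dvd_one.1 hu)
    simp at h1
  · rwa [X_sub_X_dvd_iff, map_mul, mul_eq_zero, ← X_sub_X_dvd_iff, ← X_sub_X_dvd_iff] at hPQ

theorem X_sub_X_dvd_X_sub_X_iff {k l k' l' : ι} (h : k' ≠ l') :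
    (X l - X k : MvPolynomial ι R) ∣ X l' - X k' ↔ s(k, l) = s(k', l') := by
  classical
  rw [X_sub_X_dvd_iff, map_sub, sub_eq_zero, rename_X, rename_X, X_injective.eq_iff, Sym2.eq_iff]
  simp only [Function.update_apply, id]
  grind

theorem prod_X_sub_X_dvd {α : Type*} {T : Finset α} {f g : α → ι} (hne : ∀ a ∈ T, f a ≠ g a)
    (hinj : Set.InjOn (fun a => s(f a, g a)) T) {P : MvPolynomial ι R}
    (hP : ∀ a ∈ T, X (g a) - X (f a) ∣ P) : ∏ a ∈ T, (X (g a) - X (f a)) ∣ P := by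
  classical
  induction T using Finset.induction_on with
  | empty => simp
  | insert a T ha ih =>
    simp only [Finset.forall_mem_insert, Finset.coe_insert] at hne hP hinj
    obtain ⟨Q, rfl⟩ := ih hne.2 (hinj.mono (Set.subset_insert _ _)) hP.2
    have hprime : Prime (X (g a) - X (f a) : MvPolynomial ι R) := prime_X_sub_X hne.1
    have hnot : ¬ (X (g a) - X (f a) : MvPolynomial ι R) ∣ ∏ b ∈ T, (X (g b) - X (f b)) := by
      rw [hprime.dvd_finsetProd_iff]
      rintro ⟨b, hb, hdvd⟩
      have hab := hinj (Set.mem_insert _ _) (Set.mem_insert_of_mem _ hb)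
        ((X_sub_X_dvd_X_sub_X_iff (hne.2 b hb)).1 hdvd)
      exact ha (hab ▸ hb)
    rw [Finset.prod_insert ha, mul_comm]
    exact mul_dvd_mul_left _ ((hprime.dvd_or_dvd hP.1).resolve_left hnot)

end DifferencesOfVariables

section Vandermonde

variable (R : Type*) [CommRing R] (n : ℕ)

/-- The Vandermonde determinant `∏_{i < j} (t_j - t_i)` of the variables, the common denominator of
the localization sum. -/
noncomputable def vandermondePoly : MvPolynomial (Fin n) R :=
  (Matrix.vandermonde X).det

theorem rename_vandermondePoly (f : Fin n → Fin n) :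
    rename f (vandermondePoly R n) = ((Matrix.vandermonde X).submatrix f id).det := by
  rw [vandermondePoly, AlgHom.map_det]
  congr 1
  ext i j : 2
  simp [Matrix.vandermonde_apply]

theorem rename_swap_vandermondePoly {i j : Fin n} (h : i ≠ j) :
    rename (Equiv.swap i j) (vandermondePoly R n) = -vandermondePoly R n := by
  rw [rename_vandermondePoly, Matrix.det_permute, Equiv.Perm.sign_swap h, vandermondePoly]
  simp

theorem X_sub_X_dvd_vandermondePoly {i j : Fin n} (h : i ≠ j) :
    X j - X i ∣ vandermondePoly R n := by
  rw [X_sub_X_dvd_iff, rename_vandermondePoly]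
  refine Matrix.det_zero_of_row_eq h (funext fun a => ?_)
  simp [Function.update_of_ne h]

variable [IsDomain R]

theorem vandermondePoly_ne_zero : vandermondePoly R n ≠ 0 :=
  Matrix.det_vandermonde_ne_zero_iff.2 X_injective

variable {R n}

theorem vandermondePoly_dvd {P : MvPolynomial (Fin n) R} (hP : ∀ i j, i ≠ j → X j - X i ∣ P) :
    vandermondePoly R n ∣ P := by
  rw [vandermondePoly, Matrix.det_vandermonde, Finset.prod_sigma']
  have hlt : ∀ a ∈ Finset.univ.sigma fun i : Fin n => Finset.Ioi i, a.1 < a.2 := by simp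
  refine prod_X_sub_X_dvd (fun a ha => (hlt a ha).ne) (fun a ha b hb hab => ?_)
    fun a ha => hP _ _ (hlt a ha).ne
  have ha' := hlt a ha
  have hb' := hlt b hb
  rcases Sym2.eq_iff.1 hab with ⟨h₁, h₂⟩ | ⟨h₁, h₂⟩
  · exact Sigma.ext h₁ (heq_of_eq h₂)
  · exact absurd (h₁ ▸ h₂ ▸ ha') hb'.not_gt

end Vandermonde

section EulerClass

variable (R : Type*) [CommRing R] {ι : Type*} [Fintype ι] [DecidableEq ι] (s : Finset ι)

/-- The Euler class `e_s = ∏_{k ∈ s, l ∉ s} (t_l - t_k)` of the tangent space of the Grassmannian at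
the torus-fixed point indexed by `s`. -/
noncomputable def eulerClass : MvPolynomial ι R :=
  ∏ k ∈ s, ∏ l ∈ sᶜ, (X l - X k)

theorem rename_perm_eulerClass (σ : Equiv.Perm ι) :
    rename σ (eulerClass R s) = eulerClass R (s.map σ.toEmbedding) := by
  have hcompl : (s.map σ.toEmbedding)ᶜ = sᶜ.map σ.toEmbedding := by
    ext a
    simp [Finset.mem_map_equiv]
  simp [eulerClass, hcompl]

variable [IsDomain R]

variable {s} in
theorem rename_eulerClass_ne_zero {κ : Type*} {f : ι → κ}
    (hf : ∀ k ∈ s, ∀ l ∉ s, f k ≠ f l) : rename f (eulerClass R s) ≠ 0 := by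
  simp only [eulerClass, map_prod, map_sub, rename_X, Finset.prod_ne_zero_iff, sub_ne_zero]
  exact fun k hk l hl => X_injective.ne (hf k hk l (Finset.mem_compl.1 hl)).symm

theorem eulerClass_ne_zero : eulerClass R s ≠ 0 := by
  rw [← rename_id_apply (eulerClass R s)]
  exact rename_eulerClass_ne_zero R fun k hk l hl => ne_of_mem_of_not_mem hk hl

theorem totalDegree_eulerClass :
    (eulerClass R s).totalDegree = s.card * (Fintype.card ι - s.card) := by
  have h : (eulerClass R s).IsHomogeneous (∑ _k ∈ s, ∑ _l ∈ sᶜ, 1) :=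
    IsHomogeneous.prod _ _ _ fun k _ => IsHomogeneous.prod _ _ _ fun l _ =>
      (isHomogeneous_X R l).sub (isHomogeneous_X R k)
  rw [h.totalDegree (eulerClass_ne_zero R s)]
  simp [Finset.card_compl]

end EulerClass

section EulerCofactor

variable (R : Type*) [CommRing R] [IsDomain R] {n : ℕ} (s : Finset (Fin n))

theorem eulerClass_dvd_vandermondePoly : eulerClass R s ∣ vandermondePoly R n := by
  rw [eulerClass, ← Finset.prod_product' s sᶜ fun k l => (X l - X k : MvPolynomial (Fin n) R)]
  have hne : ∀ p ∈ s ×ˢ sᶜ, p.1 ≠ p.2 := by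
    simp only [Finset.mem_product, Finset.mem_compl]
    grind
  refine prod_X_sub_X_dvd hne (fun p hp q hq hpq => ?_)
    fun p hp => X_sub_X_dvd_vandermondePoly R n (hne p hp)
  simp only [Finset.coe_product, Set.mem_prod, Finset.mem_coe, Finset.mem_compl] at hp hq
  rcases Sym2.eq_iff.1 hpq with ⟨h₁, h₂⟩ | ⟨h₁, -⟩
  · exact Prod.ext h₁ h₂
  · exact absurd (h₁ ▸ hp.1) hq.2

/-- The quotient of the Vandermonde determinant by the Euler class `e_s`. -/
noncomputable def eulerCofactor : MvPolynomial (Fin n) R :=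
  (eulerClass_dvd_vandermondePoly R s).choose

theorem eulerClass_mul_eulerCofactor :
    eulerClass R s * eulerCofactor R s = vandermondePoly R n :=
  (eulerClass_dvd_vandermondePoly R s).choose_spec.symm

theorem totalDegree_eulerCofactor :
    s.card * (n - s.card) + (eulerCofactor R s).totalDegree =
      (vandermondePoly R n).totalDegree := by
  have hprod := eulerClass_mul_eulerCofactor R s
  have hne : eulerCofactor R s ≠ 0 :=
    right_ne_zero_of_mul (hprod ▸ vandermondePoly_ne_zero R n)
  rw [← hprod, totalDegree_mul_of_isDomain (eulerClass_ne_zero R s) hne, totalDegree_eulerClass,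
    Fintype.card_fin]

theorem rename_swap_eulerCofactor {i j : Fin n} (h : i ≠ j) :
    rename (Equiv.swap i j) (eulerCofactor R s) =
      -eulerCofactor R (s.map (Equiv.swap i j).toEmbedding) := by
  refine mul_left_cancel₀ (eulerClass_ne_zero R (s.map (Equiv.swap i j).toEmbedding)) ?_
  rw [mul_neg, eulerClass_mul_eulerCofactor, ← rename_perm_eulerClass, ← map_mul,
    eulerClass_mul_eulerCofactor, rename_swap_vandermondePoly R n h]

variable {s} in
theorem X_sub_X_dvd_eulerCofactor {i j : Fin n} (h : i ≠ j) (hs : i ∈ s ↔ j ∈ s) :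
    X j - X i ∣ eulerCofactor R s := by
  have hdvd : X j - X i ∣ eulerClass R s * eulerCofactor R s := by
    rw [eulerClass_mul_eulerCofactor]
    exact X_sub_X_dvd_vandermondePoly R n h
  refine ((prime_X_sub_X h).dvd_or_dvd hdvd).resolve_left fun he => ?_
  refine rename_eulerClass_ne_zero R (fun k hk l hl => ?_) (X_sub_X_dvd_iff.1 he)
  simp only [Function.update_apply, id]
  grind

end EulerCofactor

section EvalAt

theorem rename_eq_rename_of_isSymmetric {ι κ R : Type*} [CommSemiring R] {W : MvPolynomial ι R}
    (hW : W.IsSymmetric) {f g : ι → κ} (hf : f.Injective) (hg : g.Injective)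
    (hfg : Set.range f = Set.range g) : rename f W = rename g W := by
  let e : Equiv.Perm ι :=
    (Equiv.ofInjective f hf).trans ((Equiv.setCongr hfg).trans (Equiv.ofInjective g hg).symm)
  have hge : g ∘ e = f := funext fun i => by simp [e, Equiv.apply_ofInjective_symm]
  rw [← hge, ← rename_rename, hW e]

variable {ι R : Type*} [LinearOrder ι] [CommSemiring R] {m : ℕ}

/-- The evaluation `W(t_s)` of `W` at the variables indexed by `s`, taken in increasing order. -/
noncomputable def evalAt (W : MvPolynomial (Fin m) R) (s : {s : Finset ι // s.card = m}) :
    MvPolynomial ι R :=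
  rename (fun i => (s.1.orderIsoOfFin s.2 i : ι)) W

/-- The image of an `m`-element subset under a permutation. -/
def permSubset (σ : Equiv.Perm ι) (s : {s : Finset ι // s.card = m}) :
    {s : Finset ι // s.card = m} :=
  ⟨s.1.map σ.toEmbedding, by rw [Finset.card_map, s.2]⟩

theorem rename_perm_evalAt {W : MvPolynomial (Fin m) R} (hW : W.IsSymmetric) (σ : Equiv.Perm ι)
    (s : {s : Finset ι // s.card = m}) :
    rename σ (evalAt W s) = evalAt W (permSubset σ s) := by
  rw [evalAt, evalAt, rename_rename]
  refine rename_eq_rename_of_isSymmetric hW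
    (σ.injective.comp (s.1.orderEmbOfFin s.2).injective)
    ((permSubset σ s).1.orderEmbOfFin (permSubset σ s).2).injective ?_
  simp only [Finset.coe_orderIsoOfFin_apply, Set.range_comp, Finset.range_orderEmbOfFin]
  simp [permSubset]

end EvalAt

theorem eq_C_of_totalDegree_mul_le {ι R : Type*} [CommRing R] [IsDomain R]
    {P Q : MvPolynomial ι R} (hP : P ≠ 0) (h : (P * Q).totalDegree ≤ P.totalDegree) :
    Q = C (Q.coeff 0) := by
  rcases eq_or_ne Q 0 with rfl | hQ
  · simp
  rw [totalDegree_mul_of_isDomain hP hQ] at h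
  exact totalDegree_eq_zero_iff_eq_C.1 (by omega)

section LocalizationSum

variable {R : Type*} [CommRing R] [IsDomain R] {m : ℕ} (n : ℕ) (W : MvPolynomial (Fin m) R)

/-- The localization sum `∑_s W(t_s) / e_s` over the `m`-element subsets of `Fin n`, for
coefficients in an arbitrary domain. -/
noncomputable def locSum : FractionRing (MvPolynomial (Fin n) R) :=
  ∑ s : {s : Finset (Fin n) // s.card = m},
    algebraMap (MvPolynomial (Fin n) R) (FractionRing (MvPolynomial (Fin n) R)) (evalAt W s) /
      algebraMap (MvPolynomial (Fin n) R) (FractionRing (MvPolynomial (Fin n) R))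
        (eulerClass R s.1)

theorem grassLocSum_eq_locSum (W : MvPolynomial (Fin m) ℚ) : grassLocSum m n W = locSum n W := by
  simp only [grassLocSum, locSum, evalAt, eulerClass, rename_eq_aeval, Function.comp_def]

/-- The numerator of the localization sum over the Vandermonde determinant. -/
noncomputable def locNumerator : MvPolynomial (Fin n) R :=
  ∑ s : {s : Finset (Fin n) // s.card = m}, evalAt W s * eulerCofactor R s.1

theorem vandermondePoly_mul_locSum :
    algebraMap _ (FractionRing (MvPolynomial (Fin n) R)) (vandermondePoly R n) * locSum n W =
      algebraMap _ _ (locNumerator n W) := by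
  rw [locSum, locNumerator, Finset.mul_sum, map_sum]
  refine Finset.sum_congr rfl fun s _ => ?_
  have he : algebraMap _ (FractionRing (MvPolynomial (Fin n) R)) (eulerClass R s.1) ≠ 0 :=
    (map_ne_zero_iff _ (IsFractionRing.injective _ _)).2 (eulerClass_ne_zero R s.1)
  rw [← eulerClass_mul_eulerCofactor R s.1, map_mul, map_mul]
  field_simp

variable {W}

theorem vandermondePoly_dvd_locNumerator (hW : W.IsSymmetric) :
    vandermondePoly R n ∣ locNumerator n W := by
  refine vandermondePoly_dvd fun i j hij => X_sub_X_dvd_iff.2 ?_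
  rw [locNumerator, map_sum]
  refine Finset.sum_involution (fun s _ => permSubset (Equiv.swap i j) s) (fun s _ => ?cancel)
    (fun s _ hne hfix => hne ?vanish) (fun s _ => Finset.mem_univ _) (fun s _ => ?involutive)
  case cancel =>
    have hcof : eulerCofactor R (permSubset (Equiv.swap i j) s).1 =
        -rename (Equiv.swap i j) (eulerCofactor R s.1) := by
      rw [rename_swap_eulerCofactor R s.1 hij, neg_neg, permSubset]
    rw [← rename_perm_evalAt hW, hcof, map_mul, map_mul, map_neg, rename_update_rename_swap,
      rename_update_rename_swap, mul_neg, add_neg_cancel]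
  case vanish =>
    have hs : i ∈ s.1 ↔ j ∈ s.1 := by
      conv_lhs => rw [← hfix]
      simp [permSubset, Finset.mem_map_equiv]
    rw [← X_sub_X_dvd_iff]
    exact (X_sub_X_dvd_eulerCofactor R hij hs).mul_left _
  case involutive =>
    ext a
    simp [permSubset, Finset.mem_map_equiv]

theorem totalDegree_locNumerator_le (hdeg : W.totalDegree ≤ m * (n - m)) :
    (locNumerator n W).totalDegree ≤ (vandermondePoly R n).totalDegree := by
  refine totalDegree_finsetSum_le fun s _ => ?_
  calc (evalAt W s * eulerCofactor R s.1).totalDegree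
      ≤ (evalAt W s).totalDegree + (eulerCofactor R s.1).totalDegree := totalDegree_mul _ _
    _ ≤ s.1.card * (n - s.1.card) + (eulerCofactor R s.1).totalDegree := by
        rw [s.2]
        gcongr
        exact (totalDegree_rename_le _ _).trans hdeg
    _ = (vandermondePoly R n).totalDegree := totalDegree_eulerCofactor R s.1

end LocalizationSum

end GrassLoc

open GrassLoc

theorem grassLocSum_top_degree_is_constant_general {R : Type*} [CommRing R] [IsDomain R] {m n : ℕ}
    {W : MvPolynomial (Fin m) R} (hW : W.IsSymmetric) (hdeg : W.totalDegree ≤ m * (n - m)) :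
    ∃ c : R, locSum n W = algebraMap R (FractionRing (MvPolynomial (Fin n) R)) c := by
  have hV : algebraMap _ (FractionRing (MvPolynomial (Fin n) R)) (vandermondePoly R n) ≠ 0 :=
    (map_ne_zero_iff _ (IsFractionRing.injective _ _)).2 (vandermondePoly_ne_zero R n)
  obtain ⟨Q, hQ⟩ := vandermondePoly_dvd_locNumerator n hW
  have hC : Q = C (Q.coeff 0) :=
    eq_C_of_totalDegree_mul_le (vandermondePoly_ne_zero R n)
      (hQ ▸ totalDegree_locNumerator_le n hdeg)
  refine ⟨Q.coeff 0, mul_left_cancel₀ hV ?_⟩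
  rw [vandermondePoly_mul_locSum, hQ, map_mul,
    IsScalarTower.algebraMap_apply R (MvPolynomial (Fin n) R), algebraMap_eq, ← hC]

theorem grassLocSum_top_degree_is_constant (m n : ℕ) (hm : 0 < m) (hmn : m < n)
    (W : MvPolynomial (Fin m) ℚ) (hWsymm : W.IsSymmetric)
    (hWhom : W.IsHomogeneous (m * (n - m))) :
    ∃ q : ℚ, grassLocSum m n W = (q : FractionRing (MvPolynomial (Fin n) ℚ)) := by
  obtain ⟨q, hq⟩ := grassLocSum_top_degree_is_constant_general hWsymm hWhom.totalDegree_le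
  exact ⟨q, (grassLocSum_eq_locSum n W).trans (hq.trans (eq_ratCast _ q))⟩
end

section
/- Let $F$ be a field, let $0 < m < n$, and let $t_1, \dots, t_n$ be pairwise distinct elements of $F$. For an $m$-element subset $\lambda \subseteq \{1,\dots,n\}$ write $e_\lambda = \prod_{k \in \lambda,\; \ell \notin \lambda} (t_\ell - t_k)$. Then $\sum_{\lambda \subseteq \{1,\dots,n\},\ |\lambda| = m} \frac{\big(-\sum_{i \in \lambda} t_i\big)^{m(n-m)}}{e_\lambda} \;=\; \frac{(m(n-m))!}{\prod_{i=1}^{m} \prod_{j=1}^{n-m} (n - i - j + 1)}$, where the right-hand side is the natural number $\deg(\mathrm{Grass}_m(\mathbb{C}^n))$ given by the hook length formula for the $m \times (n-m)$ rectangle (the hook length at box $(i,j)$ being $(m-i) + (n-m-j) + 1 = n - i - j + 1$), regarded as an element of $F$. -/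
/-!
After replacing `t` by `-t`, `e_λ = ∏ k ∈ λ, ∏ l ∉ λ, (t_k - t_l)` and the numerators are values of
`p = (x_1 + ⋯ + x_m) ^ (m * r)`, where `r = n - m`. With `w_k = ∏ l ≠ k, (t_k - t_l)⁻¹`, the factor
`1 / e_λ` is `∏ k ∈ λ, w_k` times the product of `t_k - t_l` over ordered pairs in `λ`, that is,
times `V * det (x_i ^ (m - j))`, where `V` is the Vandermonde determinant. Expanding the second
determinant turns the sum over subsets into the sum over all tuples of `w_{f 1} ⋯ w_{f m}` times the
value of `p * V * ∏ i, x_i ^ (m - i)`; no division by `m!` occurs, so every characteristic is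
allowed. By Lagrange interpolation in each variable, such a weighted sum is the coefficient of
`∏ i, x_i ^ (n - 1)`, hence the localization sum is the coefficient of `∏ i, x_i ^ (r + i - 1)` in
`p * V`.

That coefficient is an integer. Since falling factorials are monic polynomials, expanding `V` gives
Frobenius' formula: the coefficient of `x ^ b` in `(x_1 + ⋯ + x_m) ^ N * V` is
`N! * V(b) / ∏ i, b_i!`. For `b_i = r + i - 1` one has `V(b) = ∏ i, (i - 1)!`, and
`(r + i - 1)! / (i - 1)!` is the product of the hook lengths in row `m + 1 - i`.
-/

open Finset MvPolynomial

section CoefficientFormula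

variable {F ι σ : Type*} [Field F] [DecidableEq ι]

theorem sum_nodalWeight_mul_pow {s : Finset ι} {v : ι → F} (hv : Set.InjOn v s) {a : ℕ}
    (ha : a < #s) :
    ∑ k ∈ s, Lagrange.nodalWeight s v k * v k ^ a = if a + 1 = #s then 1 else 0 := by
  have h := Lagrange.coeff_eq_sum hv (P := Polynomial.X ^ a)
    (by rwa [Polynomial.degree_X_pow, Nat.cast_lt])
  rw [Polynomial.coeff_X_pow] at h
  simp only [show a + 1 = #s ↔ #s - 1 = a by omega, h, Lagrange.nodalWeight,
    Polynomial.eval_pow, Polynomial.eval_X, prod_inv_distrib, div_eq_inv_mul]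

theorem sum_prod_nodalWeight_mul_prod_pow [Fintype σ] [DecidableEq σ] {S : σ → Finset ι}
    {v : σ → ι → F} (hv : ∀ i, Set.InjOn (v i) (S i)) {a d : σ →₀ ℕ} (hS : ∀ i, #(S i) = d i + 1)
    (had : a.degree ≤ d.degree) :
    ∑ f ∈ Fintype.piFinset S,
        (∏ i, Lagrange.nodalWeight (S i) (v i) (f i)) * ∏ i, v i (f i) ^ a i =
      if a = d then 1 else 0 := by
  simp only [← prod_mul_distrib]
  rw [← prod_univ_sum S fun i k ↦ Lagrange.nodalWeight (S i) (v i) k * v i k ^ a i]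
  split_ifs with h
  · subst h
    exact prod_eq_one fun i _ ↦ by
      rw [sum_nodalWeight_mul_pow (hv i) (by simp [hS]), if_pos (hS i).symm]
  · obtain ⟨i, hi⟩ : ∃ i, a i < d i := by
      by_contra! hle
      refine h (Finsupp.ext fun i ↦ ?_)
      have hsum : ∑ i, d i = ∑ i, a i := le_antisymm (sum_le_sum fun i _ ↦ hle i) <| by
        simpa [Finsupp.degree_eq_sum] using had
      exact ((sum_eq_sum_iff_of_le fun i _ ↦ hle i).mp hsum i (mem_univ i)).symm
    refine prod_eq_zero (mem_univ i) ?_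
    rw [sum_nodalWeight_mul_pow (hv i) (by grind), if_neg (by grind)]

theorem sum_prod_nodalWeight_mul_eval [Fintype σ] [DecidableEq σ] {S : σ → Finset ι}
    {v : σ → ι → F} (hv : ∀ i, Set.InjOn (v i) (S i)) {d : σ →₀ ℕ} (hS : ∀ i, #(S i) = d i + 1)
    {p : MvPolynomial σ F} (hp : p.totalDegree ≤ d.degree) :
    ∑ f ∈ Fintype.piFinset S,
        (∏ i, Lagrange.nodalWeight (S i) (v i) (f i)) * eval (fun i ↦ v i (f i)) p =
      p.coeff d := by
  simp only [eval_eq', mul_sum, mul_left_comm _ (coeff _ p)]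
  rw [sum_comm]
  simp only [← mul_sum]
  calc _ = ∑ a ∈ p.support, p.coeff a * if a = d then 1 else 0 := sum_congr rfl fun a ha ↦ by
        rw [sum_prod_nodalWeight_mul_prod_pow hv hS ((le_totalDegree ha).trans hp)]
    _ = p.coeff d := by simp +contextual [eq_comm]

end CoefficientFormula

section Vandermonde

theorem det_vandermonde_eq_sum_perm {R : Type*} [CommRing R] {m : ℕ} (x : Fin m → R) :
    (Matrix.vandermonde x).det =
      ∑ σ : Equiv.Perm (Fin m), ((Equiv.Perm.sign σ : ℤ) : R) * ∏ i, x i ^ (σ i : ℕ) := by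
  rw [← Matrix.det_transpose, Matrix.det_apply']
  rfl

theorem det_vandermonde_mul_det_rev {R : Type*} [CommRing R] {m : ℕ} (x : Fin m → R) :
    (Matrix.vandermonde x).det * (Matrix.of fun i j : Fin m ↦ x i ^ (j.rev : ℕ)).det =
      ∏ i, ∏ j ∈ univ.erase i, (x i - x j) := by
  have hrev : (Matrix.of fun i j : Fin m ↦ x i ^ (j.rev : ℕ)) = Matrix.projVandermonde 1 x := by
    ext i j
    simp [Matrix.projVandermonde_apply]
  simp only [← compl_singleton]
  rw [hrev, Matrix.det_vandermonde, Matrix.det_projVandermonde,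
    ← prod_prod_Ioi_mul_eq_prod_prod_off_diag fun j i ↦ x i - x j, ← prod_mul_distrib]
  simp only [← prod_mul_distrib, Pi.one_apply, mul_one, mul_comm]

theorem totalDegree_det_vandermonde_X_le (R : Type*) [CommRing R] (m : ℕ) :
    (Matrix.vandermonde (X : Fin m → MvPolynomial (Fin m) R)).det.totalDegree ≤
      ∑ i : Fin m, (i : ℕ) := by
  rw [det_vandermonde_eq_sum_perm]
  refine totalDegree_finsetSum_le fun σ _ ↦ ?_
  rw [← map_intCast (C (R := R)), ← Equiv.sum_comp σ fun i : Fin m ↦ (i : ℕ)]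
  refine (totalDegree_mul _ _).trans ?_
  rw [totalDegree_C, zero_add]
  refine (totalDegree_finsetProd _ _).trans (sum_le_sum fun i _ ↦ ?_)
  rw [X_pow_eq_monomial]
  exact (totalDegree_monomial_le _ _).trans (by simp)

end Vandermonde

section Frobenius

theorem coeff_sum_X_pow_mul_monomial {σ R : Type*} [Fintype σ] [CommSemiring R] {N : ℕ}
    {a b : σ →₀ ℕ} (h : b.degree = N + a.degree) :
    coeff b ((∑ i, X i : MvPolynomial σ R) ^ N * monomial a 1) * ∏ i, ((b i).factorial : R) =
      N.factorial * ∏ i, ((b i).descFactorial (a i) : R) := by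
  rw [coeff_mul_monomial', mul_one]
  split_ifs with hab
  · have hdeg : (b - a).degree = N := by
      have := Finsupp.degree.map_add (b - a) a
      rw [tsub_add_cancel_of_le hab] at this
      omega
    have hspec := Nat.multinomial_spec univ (b - a)
    rw [← Finsupp.degree_eq_sum, hdeg] at hspec
    rw [coeff_sum_X_pow_of_fintype, if_pos (show (b - a).sum (fun _ k ↦ k) = N from hdeg),
      Finsupp.multinomial_eq_of_support_subset (subset_univ _)]
    simp only [← Nat.factorial_mul_descFactorial (hab _), prod_mul_distrib, Nat.cast_mul, ← hspec,
      Nat.cast_prod, Finsupp.tsub_apply]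
    ring
  · obtain ⟨i, hi⟩ : ∃ i, b i < a i := by simpa [Finsupp.le_def] using hab
    rw [zero_mul, prod_eq_zero (mem_univ i), mul_zero]
    rw [Nat.descFactorial_of_lt hi, Nat.cast_zero]

theorem coeff_sum_X_pow_mul_det_vandermonde {m N : ℕ} {b : Fin m →₀ ℕ}
    (hb : b.degree = N + ∑ i : Fin m, (i : ℕ)) :
    coeff b ((∑ i, X i) ^ N * (Matrix.vandermonde (X : Fin m → MvPolynomial (Fin m) ℤ)).det) *
        ∏ i, ((b i).factorial : ℤ) =
      N.factorial * (Matrix.vandermonde fun i ↦ (b i : ℤ)).det := by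
  have hterm (σ : Equiv.Perm (Fin m)) :
      coeff b ((∑ i, X i) ^ N * (((Equiv.Perm.sign σ : ℤ) : MvPolynomial (Fin m) ℤ) *
          ∏ i, (X i : MvPolynomial (Fin m) ℤ) ^ (σ i : ℕ))) *
        ∏ i, ((b i).factorial : ℤ) =
      N.factorial * ((Equiv.Perm.sign σ : ℤ) * ∏ i, ((b i).descFactorial (σ i) : ℤ)) := by
    have hmon : ∏ i, (X i : MvPolynomial (Fin m) ℤ) ^ (σ i : ℕ) =
        monomial (Finsupp.equivFunOnFinite.symm fun i ↦ (σ i : ℕ)) 1 := by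
      simp [monomial_eq, Finsupp.prod_fintype]
    have hdeg : b.degree =
        N + (Finsupp.equivFunOnFinite.symm fun i ↦ (σ i : ℕ)).degree := by
      simp [hb, Finsupp.degree_eq_sum, Equiv.sum_comp σ fun i : Fin m ↦ (i : ℕ)]
    rw [hmon, mul_left_comm, ← map_intCast (C (R := ℤ)), coeff_C_mul, mul_assoc,
      coeff_sum_X_pow_mul_monomial hdeg, mul_left_comm]
    rfl
  rw [det_vandermonde_eq_sum_perm, mul_sum, coeff_sum, sum_mul, sum_congr rfl fun σ _ ↦ hterm σ,
    ← mul_sum, Matrix.det_eval_matrixOfPolynomials_eq_det_vandermonde _ (fun j ↦ descPochhammer ℤ j)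
      (fun j ↦ descPochhammer_natDegree ℤ j) fun j ↦ monic_descPochhammer ℤ j,
    ← Matrix.det_transpose, Matrix.det_apply']
  simp [descPochhammer_eval_eq_descFactorial]

end Frobenius

section Tuples

theorem card_image_univ_iff_injective {κ ι : Type*} [Fintype κ] [DecidableEq ι] {f : κ → ι} :
    #(univ.image f) = Fintype.card κ ↔ Function.Injective f := by
  rw [← card_univ, card_image_iff, coe_univ, Set.injOn_univ]

theorem sum_filter_image_eq_sum_perm {κ ι M : Type*} [Fintype κ] [DecidableEq κ] [Fintype ι]
    [DecidableEq ι] [AddCommMonoid M] {e : κ → ι} (he : Function.Injective e) (G : (κ → ι) → M) :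
    ∑ f with univ.image f = univ.image e, G f = ∑ σ : Equiv.Perm κ, G (e ∘ σ) := by
  symm
  refine sum_nbij (fun σ ↦ e ∘ σ) (fun σ _ ↦ ?_) (fun σ _ τ _ h ↦ ?_) (fun f hf ↦ ?_)
    fun _ _ ↦ rfl
  · rw [mem_filter_univ, ← image_image, image_univ_equiv]
  · exact Equiv.ext fun i ↦ he (congrFun h i)
  · replace hf : univ.image f = univ.image e := by simpa using hf
    have hf_inj : Function.Injective f := by
      rwa [← card_image_univ_iff_injective, hf, card_image_univ_iff_injective]
    have hf_mem (i : κ) : ∃ j, e j = f i := by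
      have h : f i ∈ univ.image e := hf ▸ mem_image_of_mem f (mem_univ i)
      simpa using h
    choose g hg using hf_mem
    have hg_inj : Function.Injective g := fun i j hij ↦ hf_inj (by rw [← hg, ← hg, hij])
    exact ⟨.ofBijective g (Finite.injective_iff_bijective.mp hg_inj), mem_coe.mpr (mem_univ _),
      funext hg⟩

end Tuples

section Localization

/-- The partition `(r, …, r)` with `m` parts plus the staircase `(0, 1, …, m - 1)`, i.e. the usual
`λ + δ` for the `m × r` rectangle `λ`, listed in increasing order. -/
noncomputable def shiftedRectangle (m r : ℕ) : Fin m →₀ ℕ :=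
  Finsupp.equivFunOnFinite.symm fun i ↦ r + i

theorem degree_shiftedRectangle (m r : ℕ) :
    (shiftedRectangle m r).degree = m * r + ∑ i : Fin m, (i : ℕ) := by
  simp [shiftedRectangle, Finsupp.degree_eq_sum, sum_add_distrib]

variable {F ι : Type*} [Field F] [DecidableEq ι]

theorem prod_nodalWeight_mul_prod_erase {S s : Finset ι} (hs : s ⊆ S) {t : ι → F}
    (ht : Set.InjOn t S) :
    (∏ k ∈ s, Lagrange.nodalWeight S t k) * ∏ k ∈ s, ∏ l ∈ s.erase k, (t k - t l) =
      (∏ k ∈ s, ∏ l ∈ S \ s, (t k - t l))⁻¹ := by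
  simp only [← prod_inv_distrib, ← prod_mul_distrib]
  refine prod_congr rfl fun k hk ↦ ?_
  have hsplit : S.erase k \ s.erase k = S \ s := by grind
  rw [Lagrange.nodalWeight, ← prod_sdiff (erase_subset_erase k hs), hsplit, mul_assoc,
    ← prod_mul_distrib, prod_eq_one (s := s.erase k), mul_one]
  intro l hl
  refine inv_mul_cancel₀ (sub_ne_zero.mpr fun h ↦ ne_of_mem_erase hl ?_)
  exact (ht (hs hk) (hs (mem_of_mem_erase hl)) h).symm

variable [Fintype ι] {m : ℕ} {t : ι → F}

theorem sum_filter_image_prod_nodalWeight_mul_det (ht : Function.Injective t) {e : Fin m → ι}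
    (he : Function.Injective e) :
    ∑ f : Fin m → ι with univ.image f = univ.image e, (∏ i, Lagrange.nodalWeight univ t (f i)) *
        ((Matrix.vandermonde (t ∘ f)).det * ∏ i, t (f i) ^ (i.rev : ℕ)) =
      (∏ k ∈ univ.image e, ∏ l ∈ (univ.image e)ᶜ, (t k - t l))⁻¹ := by
  have hterm (σ : Equiv.Perm (Fin m)) :
      (∏ i, Lagrange.nodalWeight univ t ((e ∘ σ) i)) *
        ((Matrix.vandermonde (t ∘ e ∘ σ)).det * ∏ i, t ((e ∘ σ) i) ^ (i.rev : ℕ)) =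
      (∏ i, Lagrange.nodalWeight univ t (e i)) * ((Matrix.vandermonde (t ∘ e)).det *
        (((Equiv.Perm.sign σ : ℤ) : F) * ∏ i, t (e (σ i)) ^ (i.rev : ℕ))) := by
    have hV : (Matrix.vandermonde (t ∘ e ∘ σ)).det =
        ((Equiv.Perm.sign σ : ℤ) : F) * (Matrix.vandermonde (t ∘ e)).det :=
      Matrix.det_permute σ (Matrix.vandermonde (t ∘ e))
    have hw := Equiv.prod_comp σ fun i ↦ Lagrange.nodalWeight univ t (e i)
    simp only [Function.comp_apply, hw, hV]
    ring
  have hdet : (Matrix.of fun i j : Fin m ↦ (t ∘ e) i ^ (j.rev : ℕ)).det =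
      ∑ σ : Equiv.Perm (Fin m), ((Equiv.Perm.sign σ : ℤ) : F) *
        ∏ i, t (e (σ i)) ^ (i.rev : ℕ) :=
    Matrix.det_apply' _
  have hoff : ∏ i, ∏ j ∈ univ.erase i, ((t ∘ e) i - (t ∘ e) j) =
      ∏ k ∈ univ.image e, ∏ l ∈ (univ.image e).erase k, (t k - t l) := by
    simp only [← image_erase he, prod_image he.injOn, Function.comp_apply]
  rw [sum_filter_image_eq_sum_perm he, sum_congr rfl fun σ _ ↦ hterm σ, ← mul_sum, ← mul_sum,
    compl_eq_univ_sdiff, ← prod_nodalWeight_mul_prod_erase (subset_univ _) ht.injOn, ← hdet,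
    det_vandermonde_mul_det_rev, hoff,
    prod_image (f := fun k ↦ Lagrange.nodalWeight univ t k) he.injOn]

theorem coeff_mul_det_vandermonde_eq_sum {r : ℕ} (hcard : Fintype.card ι = m + r)
    (ht : Function.Injective t) {p : MvPolynomial (Fin m) F} (hp : p.totalDegree ≤ m * r) :
    coeff (shiftedRectangle m r) (p * (Matrix.vandermonde X).det) =
      ∑ f : Fin m → ι, (∏ i, Lagrange.nodalWeight univ t (f i)) *
        (eval (t ∘ f) p * ((Matrix.vandermonde (t ∘ f)).det * ∏ i, t (f i) ^ (i.rev : ℕ))) := by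
  set a : Fin m →₀ ℕ := Finsupp.equivFunOnFinite.symm fun i ↦ i.rev
  set q := p * (Matrix.vandermonde X).det * monomial a 1
  have hq : q.totalDegree ≤ (shiftedRectangle m r + a).degree := by
    rw [map_add, degree_shiftedRectangle]
    exact (totalDegree_mul _ _).trans <| add_le_add ((totalDegree_mul _ _).trans <|
      add_le_add hp (totalDegree_det_vandermonde_X_le F m)) (totalDegree_monomial_le _ _)
  have hgrid (i : Fin m) : #(univ : Finset ι) = (shiftedRectangle m r + a) i + 1 := by
    have hadd : (shiftedRectangle m r + a) i = r + i + i.rev := rfl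
    rw [card_univ, hcard, hadd, Fin.val_rev]
    omega
  have heval (f : Fin m → ι) : eval (t ∘ f) q = eval (t ∘ f) p *
      ((Matrix.vandermonde (t ∘ f)).det * ∏ i, t (f i) ^ (i.rev : ℕ)) := by
    simp [q, a, Matrix.det_vandermonde, eval_monomial, Finsupp.prod_fintype, mul_assoc]
  simp only [← heval]
  rw [← mul_one (coeff _ _), ← coeff_mul_monomial _ a, ← Fintype.piFinset_univ]
  exact (sum_prod_nodalWeight_mul_eval (fun _ ↦ ht.injOn) hgrid hq).symm

theorem sum_powersetCard_div_eq_coeff {r : ℕ} (hcard : Fintype.card ι = m + r)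
    (ht : Function.Injective t) {p : MvPolynomial (Fin m) F} (hp : p.totalDegree ≤ m * r)
    {φ : Finset ι → F} (hφ : ∀ f : Fin m → ι, Function.Injective f →
      φ (univ.image f) = eval (t ∘ f) p) :
    ∑ s ∈ powersetCard m univ, φ s / ∏ k ∈ s, ∏ l ∈ sᶜ, (t k - t l) =
      coeff (shiftedRectangle m r) (p * (Matrix.vandermonde X).det) := by
  have hfiber (s : Finset ι) (hs : #s = m) :
      φ s / ∏ k ∈ s, ∏ l ∈ sᶜ, (t k - t l) =
        ∑ f : Fin m → ι with univ.image f = s, (∏ i, Lagrange.nodalWeight univ t (f i)) *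
          (eval (t ∘ f) p * ((Matrix.vandermonde (t ∘ f)).det * ∏ i, t (f i) ^ (i.rev : ℕ))) := by
    obtain ⟨e, he, rfl⟩ : ∃ e : Fin m → ι, Function.Injective e ∧ univ.image e = s :=
      ⟨Subtype.val ∘ (s.equivFinOfCardEq hs).symm,
        Subtype.val_injective.comp (Equiv.injective _), by
          rw [← image_image, image_univ_equiv, univ_eq_attach, attach_image_val]⟩
    rw [div_eq_mul_inv, ← sum_filter_image_prod_nodalWeight_mul_det ht he, mul_sum]
    refine sum_congr rfl fun f hf ↦ ?_
    rw [mem_filter_univ] at hf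
    have hf_inj : Function.Injective f := by
      rw [← card_image_univ_iff_injective, hf, hs, Fintype.card_fin]
    rw [← hφ f hf_inj, hf]
    ring
  rw [coeff_mul_det_vandermonde_eq_sum hcard ht hp,
    sum_congr rfl fun s hs ↦ hfiber s (mem_powersetCard_univ.mp hs),
    sum_fiberwise_eq_sum_filter, sum_filter_of_ne]
  intro f _ hf
  have hdet : (Matrix.vandermonde (t ∘ f)).det ≠ 0 :=
    left_ne_zero_of_mul (right_ne_zero_of_mul (right_ne_zero_of_mul hf))
  rw [mem_powersetCard_univ, card_image_univ_iff_injective.mpr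
    (Matrix.det_vandermonde_ne_zero_iff.mp hdet).of_comp, Fintype.card_fin]

end Localization

section Hook

theorem prod_factorial_add_eq_mul_prod_hook (m r : ℕ) :
    ∏ i ∈ range m, (r + i).factorial =
      (∏ i ∈ range m, i.factorial) *
        ∏ i ∈ range m, ∏ j ∈ range r, (m + r - i - j - 1) := by
  rw [← prod_range_reflect fun i ↦ ∏ j ∈ range r, (m + r - i - j - 1), ← prod_mul_distrib]
  refine prod_congr rfl fun i hi ↦ ?_
  rw [mem_range] at hi
  have h := Nat.factorial_mul_descFactorial (Nat.le_add_right r i)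
  rw [Nat.add_sub_cancel_left, Nat.descFactorial_eq_prod_range] at h
  rw [← h]
  congr 1
  exact prod_congr rfl fun j _ ↦ by omega

theorem det_vandermonde_natCast_add (R : Type*) [CommRing R] (m r : ℕ) :
    (Matrix.vandermonde fun i : Fin m ↦ ((r + i : ℕ) : R)).det =
      ((∏ i ∈ range m, i.factorial : ℕ) : R) := by
  cases m with
  | zero => simp
  | succ m =>
    rw [Nat.prod_range_succ_factorial, ← Matrix.det_vandermonde_id_eq_superFactorial,
      ← Matrix.det_vandermonde_add (fun i : Fin (m + 1) ↦ (i : R)) r]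
    simp only [Nat.cast_add, add_comm]

theorem coeff_shiftedRectangle_mul_prod_hook (m r : ℕ) :
    coeff (shiftedRectangle m r)
        ((∑ i, X i) ^ (m * r) * (Matrix.vandermonde (X : Fin m → MvPolynomial (Fin m) ℤ)).det) *
        ((∏ i ∈ range m, ∏ j ∈ range r, (m + r - i - j - 1) : ℕ) : ℤ) =
      (m * r).factorial := by
  have hfrobenius := coeff_sum_X_pow_mul_det_vandermonde (degree_shiftedRectangle m r)
  have hfactorial : ∏ i, ((shiftedRectangle m r i).factorial : ℤ) =
      ((∏ i ∈ range m, i.factorial : ℕ) : ℤ) *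
        (∏ i ∈ range m, ∏ j ∈ range r, (m + r - i - j - 1) : ℕ) := by
    rw [← Nat.cast_mul, ← prod_factorial_add_eq_mul_prod_hook, prod_range, Nat.cast_prod]
    rfl
  have hvandermonde : (Matrix.vandermonde fun i ↦ (shiftedRectangle m r i : ℤ)).det =
      ((∏ i ∈ range m, i.factorial : ℕ) : ℤ) :=
    det_vandermonde_natCast_add ℤ m r
  have hne : ((∏ i ∈ range m, i.factorial : ℕ) : ℤ) ≠ 0 :=
    Nat.cast_ne_zero.mpr <| prod_ne_zero_iff.mpr fun i _ ↦ Nat.factorial_ne_zero i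
  rw [hfactorial, hvandermonde] at hfrobenius
  exact mul_left_cancel₀ hne (by linear_combination hfrobenius)

theorem coeff_shiftedRectangle_eq_factorial_div_prod_hook (R : Type*) [CommRing R] (m r : ℕ) :
    coeff (shiftedRectangle m r)
        ((∑ i, X i) ^ (m * r) * (Matrix.vandermonde (X : Fin m → MvPolynomial (Fin m) R)).det) =
      (((m * r).factorial / ∏ i ∈ range m, ∏ j ∈ range r, (m + r - i - j - 1) : ℕ) : R) := by
  have hne : ((∏ i ∈ range m, ∏ j ∈ range r, (m + r - i - j - 1) : ℕ) : ℤ) ≠ 0 := by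
    refine Nat.cast_ne_zero.mpr (prod_ne_zero_iff.mpr fun i hi ↦ prod_ne_zero_iff.mpr fun j hj ↦ ?_)
    rw [mem_range] at hi hj
    omega
  have hmap : (∑ i, X i) ^ (m * r) * (Matrix.vandermonde X).det =
      map (Int.castRingHom R)
        ((∑ i, X i) ^ (m * r) * (Matrix.vandermonde (X : Fin m → MvPolynomial (Fin m) ℤ)).det) := by
    simp [Matrix.det_vandermonde]
  rw [hmap, coeff_map, Int.eq_ediv_of_mul_eq_left hne (coeff_shiftedRectangle_mul_prod_hook m r),
    ← Int.natCast_div, eq_intCast, Int.cast_natCast]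

end Hook

theorem degree_grassmannian_hook_formula {F : Type*} [Field F] (m n : ℕ)
    (hm : 0 < m) (hmn : m < n)
    (t : Fin n → F) (ht : Function.Injective t) :
    ∑ s : {s : Finset (Fin n) // s.card = m},
      (-(∑ i ∈ s.1, t i)) ^ (m * (n - m)) / ∏ k ∈ s.1, ∏ l ∈ s.1ᶜ, (t l - t k) =
      (((m * (n - m)).factorial /
          ∏ i ∈ Finset.range m, ∏ j ∈ Finset.range (n - m), (n - i - j - 1) : ℕ) : F) := by
  obtain ⟨r, rfl⟩ := Nat.exists_eq_add_of_le hmn.le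
  have hdegree : ((∑ i : Fin m, X i : MvPolynomial (Fin m) F) ^ (m * r)).totalDegree ≤ m * r :=
    (((IsHomogeneous.sum _ _ 1 fun i _ ↦ isHomogeneous_X F i).pow _).totalDegree_le).trans_eq
      (one_mul _)
  have hlocalization := sum_powersetCard_div_eq_coeff (t := -t) (Fintype.card_fin _)
    (neg_injective.comp ht) hdegree (φ := fun s ↦ (-∑ i ∈ s, t i) ^ (m * r))
    fun f hf ↦ by simp [sum_image hf.injOn]
  rw [coeff_shiftedRectangle_eq_factorial_div_prod_hook,
    sum_subtype _ fun _ ↦ mem_powersetCard_univ] at hlocalization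
  simpa only [Nat.add_sub_cancel_left, Pi.neg_apply, neg_sub_neg] using hlocalization
end

section
/- Let $F$ be a field, let $0 < m < n$, and let $t_1, \dots, t_n$ be pairwise distinct elements of $F$. For a partition $P = (p_1 \ge p_2 \ge \dots \ge p_r \ge 0)$ with $r$ parts and pairwise distinct elements $x_1,\dots,x_r$ of $F$, define the Schur function by the Jacobi–Trudy bialternant formula $S_P(x_1,\dots,x_r) = \det\big(x_a^{\,r-b+p_b}\big)_{1 \le a,b \le r} \,\big/\, \prod_{1 \le a < b \le r}(x_a - x_b)$ (this value is symmetric in $x_1,\dots,x_r$). Let $J = (j_1 \ge j_2 \ge \dots \ge j_{n-m} \ge 0)$ and $K = (k_1 \ge k_2 \ge \dots \ge k_m \ge 0)$ be partitions with $j_{n-m} - m \ge k_1$, and let $I = (j_1 - m \ge j_2 - m \ge \dots \ge j_{n-m} - m \ge k_1 \ge \dots \ge k_m)$ be the concatenated partition with $n$ parts. For an $m$-element subset $\lambda \subseteq \{1,\dots,n\}$ write $e_\lambda = \prod_{k \in \lambda,\; \ell \notin \lambda} (t_\ell - t_k)$, write $S_K(t_\lambda)$ for the Schur function $S_K$ evaluated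 at the family $(t_i)_{i \in \lambda}$, and $S_J(t_{\lambda^c})$ for $S_J$ evaluated at the family $(t_\ell)_{\ell \notin \lambda}$. Then $\sum_{\lambda \subseteq \{1,\dots,n\},\ |\lambda| = m} \frac{S_J(t_{\lambda^c})\, S_K(t_\lambda)}{e_\lambda} \;=\; S_I(t_1,\dots,t_n)$. -/
/-- The Schur function attached to a partition `p = (p 0 ≥ p 1 ≥ … ≥ p (r-1))`, evaluated at
`x 0, …, x (r-1)`, defined by the Jacobi–Trudy bialternant formula
`S_p(x) = det (x_a ^ (r - b + p_b))_{1 ≤ a,b ≤ r} / ∏_{a < b} (x_a - x_b)`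
(indices `a, b` one-based in the displayed formula). -/
noncomputable def schurFn {F : Type*} [Field F] {r : ℕ} (p : Fin r → ℕ) (x : Fin r → F) : F :=
  (Matrix.of fun a b : Fin r => x a ^ (r - 1 - (b : ℕ) + p b)).det /
    ∏ a : Fin r, ∏ b ∈ Finset.univ.filter (fun b => a < b), (x a - x b)

/-!
Multiply the identity by the difference product `∏_{a < b} (t_a - t_b)`. On the right this leaves
the numerator of `S_I`, which the Laplace expansion along its last `m` columns turns into a signed
sum over `λ` of products of two complementary minors. Since `i_b + n - b` is `j_b + (n - m) - b` in
the first block of columns and `k_{b - (n - m)} + n - b` in the last one, these minors are the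
numerators of `S_J(t_{λᶜ})` and `S_K(t_λ)`. On the left, listing `λᶜ` before `λ` splits the
difference product into those of `λᶜ` and `λ` times `e_λ`, at the cost of the very same sign.
-/

open Equiv

section InlImage

variable {α β ι : Type*} [Fintype α]

/-- The set of elements of `ι` enumerated by the left summand of `f`; it indexes the rows of the
first minor in a term of the Laplace expansion. -/
def inlImage (f : α ⊕ β ≃ ι) : Finset ι :=
  Finset.univ.map (Function.Embedding.inl.trans f.toEmbedding)

theorem mem_inlImage {f : α ⊕ β ≃ ι} {i : ι} : i ∈ inlImage f ↔ ∃ a, f (Sum.inl a) = i := by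
  simp [inlImage]

theorem card_inlImage (f : α ⊕ β ≃ ι) : (inlImage f).card = Fintype.card α := by
  simp [inlImage]

theorem compl_inlImage [Fintype β] [Fintype ι] [DecidableEq ι] (f : α ⊕ β ≃ ι) :
    (inlImage f)ᶜ = Finset.univ.map (Function.Embedding.inr.trans f.toEmbedding) := by
  ext i
  obtain ⟨a | b, rfl⟩ := f.surjective i <;> simp [mem_inlImage]

theorem prod_prod_inlImage_compl {M : Type*} [Fintype β] [Fintype ι] [DecidableEq ι]
    [CommMonoid M] (f : α ⊕ β ≃ ι) (g : ι → ι → M) :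
    ∏ k ∈ inlImage f, ∏ l ∈ (inlImage f)ᶜ, g k l =
      ∏ a, ∏ b, g (f (Sum.inl a)) (f (Sum.inr b)) := by
  rw [compl_inlImage, inlImage]
  simp

theorem inlImage_sumCongr_trans (σ : Perm α) (τ : Perm β) (f : α ⊕ β ≃ ι) :
    inlImage ((sumCongr σ τ).trans f) = inlImage f := by
  ext i
  simpa [mem_inlImage] using (σ.surjective.exists (p := fun a => f (Sum.inl a) = i)).symm

theorem exists_sumCongr_trans_eq [Finite β] {f g : α ⊕ β ≃ ι} (h : inlImage f = inlImage g) :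
    ∃ σ τ, (sumCongr σ τ).trans g = f := by
  have hmaps : Set.MapsTo (f.trans g.symm) (Set.range Sum.inl) (Set.range Sum.inl) := by
    rintro _ ⟨a, rfl⟩
    have hmem : f (Sum.inl a) ∈ inlImage g := h ▸ mem_inlImage.2 ⟨a, rfl⟩
    obtain ⟨a', ha'⟩ := mem_inlImage.1 hmem
    exact ⟨a', by simp [← ha']⟩
  obtain ⟨⟨σ, τ⟩, hστ⟩ := Perm.mem_sumCongrHom_range_of_perm_mapsTo_inl hmaps
  refine ⟨σ, τ, ?_⟩
  rw [show sumCongr σ τ = f.trans g.symm from hστ, trans_assoc, symm_trans_self, trans_refl]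

theorem bijective_sumCongr_trans {S : Type*} [Finite β] (ρ : S → α ⊕ β ≃ ι)
    (hρ : ∀ f : α ⊕ β ≃ ι, ∃! s, inlImage (ρ s) = inlImage f) :
    Function.Bijective fun x : S × Perm α × Perm β => (sumCongr x.2.1 x.2.2).trans (ρ x.1) := by
  constructor
  · rintro ⟨s, σ, τ⟩ ⟨s', σ', τ'⟩ h
    obtain rfl : s = s' := (hρ (ρ s')).unique
      (by simpa only [inlImage_sumCongr_trans] using congrArg inlImage h) rfl
    have hστ : sumCongr σ τ = sumCongr σ' τ' := by
      simpa [trans_assoc] using congrArg (·.trans (ρ s).symm) h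
    exact Prod.ext rfl (Perm.sumCongrHom_injective (a₁ := (σ, τ)) (a₂ := (σ', τ')) hστ)
  · intro f
    obtain ⟨s, hs, -⟩ := hρ f
    obtain ⟨σ, τ, h⟩ := exists_sumCongr_trans_eq hs.symm
    exact ⟨(s, σ, τ), h⟩

end InlImage

section LaplaceExpansion

variable {α β ι R S : Type*} [Fintype α] [DecidableEq α] [Fintype β] [DecidableEq β]
  [Fintype ι] [DecidableEq ι] [CommRing R] [Fintype S]

theorem sign_symm_trans_sumCongr_trans (e f : α ⊕ β ≃ ι) (σ : Perm α) (τ : Perm β) :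
    Perm.sign (e.symm.trans ((sumCongr σ τ).trans f)) =
      Perm.sign (e.symm.trans f) * (Perm.sign σ * Perm.sign τ) := by
  rw [← Perm.sign_sumCongr, ← Perm.sign_symm_trans_trans (sumCongr σ τ) e, ← Perm.sign_mul]
  congr 1
  ext i
  simp

theorem det_eq_sum_equiv {κ : Type*} [Fintype κ] [DecidableEq κ] (e : κ ≃ ι)
    (M : Matrix ι ι R) :
    M.det = ∑ f : κ ≃ ι, ((Perm.sign (e.symm.trans f) : ℤ) : R) * ∏ k, M (f k) (e k) := by
  rw [Matrix.det_apply', ← (e.equivCongr (Equiv.refl ι)).sum_comp]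
  refine Finset.sum_congr rfl fun f _ => congrArg₂ _ rfl ?_
  rw [← e.prod_comp]
  simp

/-- Laplace expansion along the columns `e ∘ Sum.inl`. The hypothesis on `ρ` says that each set of
rows of the right size is enumerated, followed by its complement, by exactly one `ρ s`. -/
theorem det_eq_sum_det_submatrix_mul_det_submatrix (e : α ⊕ β ≃ ι) (ρ : S → α ⊕ β ≃ ι)
    (hρ : ∀ f : α ⊕ β ≃ ι, ∃! s, inlImage (ρ s) = inlImage f) (M : Matrix ι ι R) :
    M.det = ∑ s, ((Perm.sign (e.symm.trans (ρ s)) : ℤ) : R) *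
      ((M.submatrix (ρ s ∘ Sum.inl) (e ∘ Sum.inl)).det *
        (M.submatrix (ρ s ∘ Sum.inr) (e ∘ Sum.inr)).det) := by
  rw [det_eq_sum_equiv e, ← (bijective_sumCongr_trans ρ hρ).sum_comp, Fintype.sum_prod_type]
  refine Finset.sum_congr rfl fun s _ => ?_
  rw [Matrix.det_apply', Matrix.det_apply', Finset.sum_mul_sum]
  simp only [Finset.mul_sum, Fintype.sum_prod_type,
    sign_symm_trans_sumCongr_trans, Fintype.prod_sum_type, trans_apply, sumCongr_apply,
    Sum.map_inl, Sum.map_inr, Matrix.submatrix_apply, Function.comp_apply, Units.val_mul,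
    Int.cast_mul]
  exact Finset.sum_congr rfl fun σ _ => Finset.sum_congr rfl fun τ _ => by ring

end LaplaceExpansion

section Alternant

variable {α β ι R S : Type*} [Fintype α] [DecidableEq α] [Fintype β] [DecidableEq β]
  [Fintype ι] [DecidableEq ι] [CommRing R] [Fintype S]

/-- The alternant `det (x_a ^ d_b)`, the numerator of the bialternant formula. -/
def alternant (d : ι → ℕ) (x : ι → R) : R :=
  (Matrix.of fun a b => x a ^ d b).det

theorem alternant_comp_perm (d : ι → ℕ) (x : ι → R) (π : Perm ι) :
    alternant d (x ∘ π) = ((Perm.sign π : ℤ) : R) * alternant d x :=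
  Matrix.det_permute π (.of fun a b => x a ^ d b)

theorem alternant_eq_sum (e : α ⊕ β ≃ ι) (ρ : S → α ⊕ β ≃ ι)
    (hρ : ∀ f : α ⊕ β ≃ ι, ∃! s, inlImage (ρ s) = inlImage f) (d : ι → ℕ) (x : ι → R) :
    alternant d x = ∑ s, ((Perm.sign (e.symm.trans (ρ s)) : ℤ) : R) *
      (alternant (d ∘ e ∘ Sum.inl) (x ∘ ρ s ∘ Sum.inl) *
        alternant (d ∘ e ∘ Sum.inr) (x ∘ ρ s ∘ Sum.inr)) :=
  det_eq_sum_det_submatrix_mul_det_submatrix e ρ hρ _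

end Alternant

section DifferenceProduct

variable {R : Type*} [CommRing R] {p q n r : ℕ}

/-- The difference product `∏_{a < b} (x_a - x_b)`, the denominator of the bialternant formula. -/
def diffProd (x : Fin r → R) : R :=
  ∏ a, ∏ b with a < b, (x a - x b)

theorem diffProd_eq_alternant (x : Fin r → R) :
    diffProd x = alternant (fun b => (b.rev : ℕ)) x := by
  have hdet := Matrix.det_projVandermonde 1 x
  simp only [Pi.one_apply, one_mul, ← Finset.filter_lt_eq_Ioi] at hdet
  rw [diffProd, ← hdet, alternant]
  congr 1
  ext a b
  simp [Matrix.projVandermonde_apply]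

theorem diffProd_comp_perm (x : Fin r → R) (π : Perm (Fin r)) :
    diffProd (x ∘ π) = ((Perm.sign π : ℤ) : R) * diffProd x := by
  rw [diffProd_eq_alternant, diffProd_eq_alternant, alternant_comp_perm]

theorem diffProd_ne_zero [IsDomain R] {x : Fin r → R} (hx : Function.Injective x) :
    diffProd x ≠ 0 :=
  Finset.prod_ne_zero_iff.2 fun _ _ => Finset.prod_ne_zero_iff.2 fun _ hb =>
    sub_ne_zero.2 (hx.ne (Finset.mem_filter.1 hb).2.ne)

theorem diffProd_add (x : Fin (p + q) → R) :
    diffProd x = diffProd (x ∘ Fin.castAdd q) * diffProd (x ∘ Fin.natAdd p) *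
      ∏ a, ∏ b, (x (Fin.castAdd q a) - x (Fin.natAdd p b)) := by
  have hlt (a : Fin p) (b : Fin q) : Fin.castAdd q a < Fin.natAdd p b := by
    simp only [Fin.lt_def, Fin.val_castAdd, Fin.val_natAdd]
    omega
  simp only [diffProd, Finset.prod_filter, Fin.prod_univ_add, hlt, (hlt _ _).not_gt,
    Function.comp_apply, if_true, if_false, Finset.prod_mul_distrib, Finset.prod_const_one,
    (Fin.strictMono_castAdd q).lt_iff_lt, (Fin.strictMono_natAdd p).lt_iff_lt]
  ring

/-- The decomposition of `Fin n` into its last `q` elements (left summand) and its first `p`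
elements (right summand). -/
def lastFirstEquiv (h : p + q = n) : Fin q ⊕ Fin p ≃ Fin n :=
  ((sumComm _ _).trans finSumFinEquiv).trans (finCongr h)

theorem val_lastFirstEquiv_inl (h : p + q = n) (i : Fin q) :
    (lastFirstEquiv h (Sum.inl i) : ℕ) = p + i := by
  simp [lastFirstEquiv]

theorem val_lastFirstEquiv_inr (h : p + q = n) (i : Fin p) :
    (lastFirstEquiv h (Sum.inr i) : ℕ) = i := by
  simp [lastFirstEquiv]

theorem diffProd_eq_mul_prod_lastFirstEquiv (h : p + q = n) (x : Fin n → R) :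
    diffProd x =
      diffProd (x ∘ lastFirstEquiv h ∘ Sum.inl) * diffProd (x ∘ lastFirstEquiv h ∘ Sum.inr) *
        ∏ k, ∏ l, (x (lastFirstEquiv h (Sum.inr l)) - x (lastFirstEquiv h (Sum.inl k))) := by
  subst h
  rw [Finset.prod_comm, mul_comm (diffProd (x ∘ _ ∘ Sum.inl))]
  exact diffProd_add x

theorem sign_mul_diffProd (h : p + q = n) (f : Fin q ⊕ Fin p ≃ Fin n) (x : Fin n → R) :
    ((Perm.sign ((lastFirstEquiv h).symm.trans f) : ℤ) : R) * diffProd x =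
      diffProd (x ∘ f ∘ Sum.inl) * diffProd (x ∘ f ∘ Sum.inr) *
        ∏ k ∈ inlImage f, ∏ l ∈ (inlImage f)ᶜ, (x l - x k) := by
  rw [← diffProd_comp_perm, diffProd_eq_mul_prod_lastFirstEquiv h,
    prod_prod_inlImage_compl f fun k l => x l - x k]
  simp [Function.comp_def]

end DifferenceProduct

section SchurFunction

variable {F : Type*} [Field F] {p q n r : ℕ}

/-- The exponents `r - b + P_b` (for one-based `b`) of the bialternant formula, i.e. `P` plus the
staircase `(r - 1, …, 1, 0)`. -/
def addStaircase (P : Fin r → ℕ) (b : Fin r) : ℕ :=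
  r - 1 - b + P b

theorem schurFn_mul_diffProd (P : Fin r → ℕ) {x : Fin r → F} (hx : Function.Injective x) :
    schurFn P x * diffProd x = alternant (addStaircase P) x :=
  div_mul_cancel₀ _ (diffProd_ne_zero hx)

theorem schurFn_mul_schurFn_div_mul_diffProd (h : p + q = n) (J : Fin p → ℕ) (K : Fin q → ℕ)
    {t : Fin n → F} (ht : Function.Injective t) (f : Fin q ⊕ Fin p ≃ Fin n) :
    schurFn J (t ∘ f ∘ Sum.inr) * schurFn K (t ∘ f ∘ Sum.inl) /
        (∏ k ∈ inlImage f, ∏ l ∈ (inlImage f)ᶜ, (t l - t k)) * diffProd t =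
      ((Perm.sign ((lastFirstEquiv h).symm.trans f) : ℤ) : F) *
        (alternant (addStaircase K) (t ∘ f ∘ Sum.inl) *
          alternant (addStaircase J) (t ∘ f ∘ Sum.inr)) := by
  set ε : F := ((Perm.sign ((lastFirstEquiv h).symm.trans f) : ℤ) : F) with hε
  set euler : F := ∏ k ∈ inlImage f, ∏ l ∈ (inlImage f)ᶜ, (t l - t k)
  have hεε : ε * ε = 1 := by
    rw [hε, ← Int.cast_mul, ← Units.val_mul, Int.units_mul_self, Units.val_one, Int.cast_one]
  have heuler : euler ≠ 0 := Finset.prod_ne_zero_iff.2 fun k hk => Finset.prod_ne_zero_iff.2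
    fun l hl => sub_ne_zero.2 (ht.ne fun hlk => Finset.mem_compl.1 hl (hlk ▸ hk))
  have hdiff : diffProd t =
      ε * (diffProd (t ∘ f ∘ Sum.inl) * diffProd (t ∘ f ∘ Sum.inr) * euler) := by
    rw [← sign_mul_diffProd h, ← mul_assoc, hεε, one_mul]
  rw [← schurFn_mul_diffProd K (ht.comp (f.injective.comp Sum.inl_injective)),
    ← schurFn_mul_diffProd J (ht.comp (f.injective.comp Sum.inr_injective)), hdiff]
  field_simp

/-- The concatenation `(J_1 - q, …, J_p - q, K_1, …, K_q)`. The subtraction is truncated. -/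
def subAppend (h : p + q = n) (J : Fin p → ℕ) (K : Fin q → ℕ) (c : Fin n) : ℕ :=
  if hc : (c : ℕ) < p then J ⟨c, hc⟩ - q else K ⟨(c : ℕ) - p, by omega⟩

theorem addStaircase_subAppend_comp_inl (h : p + q = n) (J : Fin p → ℕ) (K : Fin q → ℕ) :
    addStaircase (subAppend h J K) ∘ lastFirstEquiv h ∘ Sum.inl = addStaircase K := by
  ext b
  simp only [addStaircase, subAppend, Function.comp_apply, val_lastFirstEquiv_inl,
    Nat.not_lt.2 (Nat.le_add_right p b), dite_false, Nat.add_sub_cancel_left, Fin.eta]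
  omega

theorem addStaircase_subAppend_comp_inr (h : p + q = n) {J : Fin p → ℕ} (hJ : ∀ i, q ≤ J i)
    (K : Fin q → ℕ) :
    addStaircase (subAppend h J K) ∘ lastFirstEquiv h ∘ Sum.inr = addStaircase J := by
  ext b
  have hb := hJ b
  simp only [addStaircase, subAppend, Function.comp_apply, val_lastFirstEquiv_inr, b.isLt,
    dite_true, Fin.eta]
  omega

theorem card_compl_of_card_eq (h : p + q = n) {s : Finset (Fin n)} (hs : s.card = q) :
    sᶜ.card = p := by
  rw [Finset.card_compl, Fintype.card_fin]
  omega

/-- The increasing enumerations of `s` (left summand) and of `sᶜ` (right summand). -/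
def subsetComplEquiv (h : p + q = n) (s : {s : Finset (Fin n) // s.card = q}) :
    Fin q ⊕ Fin p ≃ Fin n :=
  finSumEquivOfFinset s.2 (card_compl_of_card_eq h s.2)

theorem inlImage_subsetComplEquiv (h : p + q = n) (s : {s : Finset (Fin n) // s.card = q}) :
    inlImage (subsetComplEquiv h s) = s :=
  Finset.map_orderEmbOfFin_univ s.1 s.2

theorem existsUnique_inlImage_subsetComplEquiv (h : p + q = n) (f : Fin q ⊕ Fin p ≃ Fin n) :
    ∃! s, inlImage (subsetComplEquiv h s) = inlImage f := by
  simp only [inlImage_subsetComplEquiv]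
  exact ⟨⟨inlImage f, by simp [card_inlImage]⟩, rfl, fun s hs => Subtype.ext hs⟩

theorem gysin_grassmannian_schur_general (h : p + q = n) {t : Fin n → F}
    (ht : Function.Injective t) {J : Fin p → ℕ} (hJ : ∀ i, q ≤ J i) (K : Fin q → ℕ) :
    ∑ s : {s : Finset (Fin n) // s.card = q},
      schurFn J (fun i => t (s.1ᶜ.orderIsoOfFin (card_compl_of_card_eq h s.2) i)) *
        schurFn K (fun i => t (s.1.orderIsoOfFin s.2 i)) /
        ∏ k ∈ s.1, ∏ l ∈ s.1ᶜ, (t l - t k) =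
      schurFn (subAppend h J K) t := by
  refine mul_right_cancel₀ (diffProd_ne_zero ht) ?_
  rw [schurFn_mul_diffProd _ ht, Finset.sum_mul, alternant_eq_sum (lastFirstEquiv h) _
    (existsUnique_inlImage_subsetComplEquiv h), addStaircase_subAppend_comp_inl,
    addStaircase_subAppend_comp_inr h hJ]
  refine Finset.sum_congr rfl fun s _ => ?_
  rw [← schurFn_mul_schurFn_div_mul_diffProd h J K ht, inlImage_subsetComplEquiv]
  rfl

end SchurFunction

theorem gysin_grassmannian_schur {F : Type*} [Field F] (m n : ℕ)
    (hm : 0 < m) (hmn : m < n)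
    (t : Fin n → F) (ht : Function.Injective t)
    (J : Fin (n - m) → ℕ) (hJ : Antitone J)
    (K : Fin m → ℕ) (hK : Antitone K)
    (hJK : m + K ⟨0, hm⟩ ≤ J ⟨n - m - 1, by omega⟩) :
    ∑ s : {s : Finset (Fin n) // s.card = m},
      schurFn J (fun i => t ↑((s.1ᶜ).orderIsoOfFin
            (by rw [Finset.card_compl, s.2, Fintype.card_fin]) i)) *
        schurFn K (fun i => t ↑(s.1.orderIsoOfFin s.2 i)) /
        ∏ k ∈ s.1, ∏ l ∈ s.1ᶜ, (t l - t k) =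
      schurFn (fun c : Fin n =>
        if h : (c : ℕ) < n - m then J ⟨c, h⟩ - m
        else K ⟨(c : ℕ) - (n - m), by have := c.isLt; omega⟩) t := by
  have hm_le (i : Fin (n - m)) : m ≤ J i :=
    (Nat.le_of_add_right_le hJK).trans (hJ (Nat.le_sub_one_of_lt i.isLt))
  exact gysin_grassmannian_schur_general (Nat.sub_add_cancel hmn.le) ht hm_le K
end
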